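/- arXiv:1501.01690 — 2 statements merged into one kernel-verified Lean document; each statement's English description precedes it below -/
import Mathlib

section
/- Suppose a is an action of a group Γ on a Polish space X by Borel automorphisms which has a paradoxical decomposition. Then there is a comeager Borel set B ⊆ X and a free action of the free group F₂ on X by Baire measurable automorphisms which is a-Lipschitz, such that B is invariant under the F₂-action and every element of F₂ acts by a Borel automorphism on B. -/
open scoped Pointwise

/-- The families `A₁,…,Aₙ, B₁,…,B_m` together with group elements `α₁,…,αₙ, β₁,…,β_m` form a
paradoxical decomposition of the action of `Γ` on `X`. -/
def IsParadoxicalDecomposition {Γ X : Type*} [Group Γ] [MulAction Γ X]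
    {n m : ℕ} (A : Fin n → Set X) (B : Fin m → Set X) (α : Fin n → Γ) (β : Fin m → Γ) : Prop :=
  (∀ i j, i ≠ j → Disjoint (A i) (A j)) ∧
  (∀ i j, i ≠ j → Disjoint (B i) (B j)) ∧
  (∀ i j, Disjoint (A i) (B j)) ∧
  ((⋃ i, A i) ∪ (⋃ j, B j)) = Set.univ ∧
  (∀ i j, i ≠ j → Disjoint (α i • A i) (α j • A j)) ∧
  (∀ i j, i ≠ j → Disjoint (β i • B i) (β j • B j)) ∧
  (⋃ i, α i • A i) = Set.univ ∧
  (⋃ j, β j • B j) = Set.univ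

/-- A function between topological spaces (with Borel σ-algebras) is Baire measurable if the
preimage of every Borel set has the Baire property. -/
def BaireMeasurableFun {X Y : Type*} [TopologicalSpace X] [TopologicalSpace Y]
    [MeasurableSpace Y] (f : X → Y) : Prop :=
  ∀ s : Set Y, MeasurableSet s → BaireMeasurableSet (f ⁻¹' s)

section PartA1
variable {X : Type*}

open Classical in
/-- Parent of a typed point. -/
noncomputable def vUp (Ψ : X → Fin 4 → X) (q : X × Fin 4) : Option (X × Fin 4) :=
  if h : ∃ p : X × Fin 4, p.2 ≠ 0 ∧ Ψ p.1 p.2 = q.1 then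
    some (h.choose.1, h.choose.2 + q.2 + 2) else none

noncomputable def vAct (Ψ : X → Fin 4 → X) (s : Fin 4) (p : X × Fin 4) : X × Fin 4 :=
  if p.2 ≠ s + 2 then (Ψ p.1 (p.2 - (s + 2)), s) else (vUp Ψ p).getD (p.1, s)

/-- Injectivity on nonzero slots. -/
def VInj (Ψ : X → Fin 4 → X) : Prop :=
  ∀ x y i j, i ≠ 0 → j ≠ 0 → Ψ x i = Ψ y j → x = y ∧ i = j

theorem vUp_of {Ψ : X → Fin 4 → X} (hΨ : VInj Ψ) (x : X) (i t : Fin 4) (hi : i ≠ 0) :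
    vUp Ψ (Ψ x i, t) = some (x, i + t + 2) := by
  have h : ∃ p : X × Fin 4, p.2 ≠ 0 ∧ Ψ p.1 p.2 = Ψ x i := ⟨(x, i), hi, rfl⟩
  unfold vUp
  rw [dif_pos h]
  obtain ⟨h1, h2⟩ := h.choose_spec
  obtain ⟨h3, h4⟩ := hΨ _ _ _ _ h1 hi h2
  rw [h3, h4]

theorem vUp_some {Ψ : X → Fin 4 → X} {q r : X × Fin 4} (h : vUp Ψ q = some r) :
    ∃ i, i ≠ 0 ∧ Ψ r.1 i = q.1 ∧ r.2 = i + q.2 + 2 := by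
  unfold vUp at h
  split_ifs at h with h1
  obtain ⟨h2, h3⟩ := h1.choose_spec
  simp only [Option.some.injEq] at h
  subst h
  exact ⟨_, h2, h3, rfl⟩

theorem vUp_none_iff {Ψ : X → Fin 4 → X} {x : X} {t : Fin 4} :
    vUp Ψ (x, t) = none ↔ ¬ ∃ p : X × Fin 4, p.2 ≠ 0 ∧ Ψ p.1 p.2 = x := by
  unfold vUp
  split_ifs with h <;> simp_all

theorem fin4_a (p s : Fin 4) : p - (s + 2) + s + 2 = p := by revert p s; decide
theorem fin4_b (i s : Fin 4) : i + (s + 2) + 2 = i + (s + 2 + 2) := by revert i s; decide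
theorem fin4_c (i s : Fin 4) : i + (s + 2) + 2 - (s + 2 + 2) = i := by revert i s; decide

theorem vAct_add {Ψ : X → Fin 4 → X} (hΨ : VInj Ψ) (s : Fin 4) (p : X × Fin 4)
    (h : p.2 ≠ s + 2) : vUp Ψ (vAct Ψ s p) = some p ∧ (vAct Ψ s p).2 = s := by
  unfold vAct
  rw [if_pos h]
  refine ⟨?_, rfl⟩
  rw [vUp_of hΨ _ _ _ (by intro h'; exact h (sub_eq_zero.1 h'))]
  have : p.2 - (s + 2) + s + 2 = p.2 := fin4_a _ _
  rw [this]

theorem vAct_del {Ψ : X → Fin 4 → X} (s : Fin 4) (p r : X × Fin 4)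
    (h : p.2 = s + 2) (hr : vUp Ψ p = some r) : vAct Ψ s p = r := by
  unfold vAct
  rw [if_neg (by simpa using h), hr]; rfl

theorem vAct_root {Ψ : X → Fin 4 → X} (s : Fin 4) (p : X × Fin 4)
    (h : p.2 = s + 2) (hr : vUp Ψ p = none) : vAct Ψ s p = (p.1, s) := by
  unfold vAct
  rw [if_neg (by simpa using h), hr]; rfl

theorem fin4_add (s : Fin 4) : s + 2 + 2 = s := by revert s; decide
theorem fin4_ne (s : Fin 4) : s + 2 ≠ s := by revert s; decide

theorem vAct_inv {Ψ : X → Fin 4 → X} (hΨ : VInj Ψ) (s : Fin 4) (p : X × Fin 4) :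
    vAct Ψ (s + 2) (vAct Ψ s p) = p := by
  by_cases h : p.2 = s + 2
  · rcases hr : vUp Ψ p with _ | r
    · rw [vAct_root s p h hr]
      rw [vAct_root _ _ (by simp [fin4_add])]
      · ext <;> simp [h]
      · obtain ⟨x, t⟩ := p
        rw [vUp_none_iff] at hr ⊢
        exact hr
    · rw [vAct_del s p r h hr]
      obtain ⟨i, hi, h1, h2⟩ := vUp_some hr
      have h3 : r.2 ≠ s + 2 + 2 := by
        rw [h2, h]
        intro h'
        apply hi
        have : i + (s + 2) + 2 = i + (s + 2 + 2) := fin4_b _ _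
        rw [this] at h'
        simpa using h'
      unfold vAct
      rw [if_pos h3]
      have h4 : r.2 - (s + 2 + 2) = i := by rw [h2, h]; exact fin4_c _ _
      rw [h4, h1, ← h]
  · obtain ⟨h1, h2⟩ := vAct_add hΨ s p h
    exact vAct_del _ _ _ (by rw [h2, fin4_add]) h1

noncomputable def vPerm (Ψ : X → Fin 4 → X) (hΨ : VInj Ψ) (s : Fin 4) : Equiv.Perm (X × Fin 4) where
  toFun := vAct Ψ s
  invFun := vAct Ψ (s + 2)
  left_inv p := vAct_inv hΨ s p
  right_inv p := by
    have := vAct_inv hΨ (s + 2) p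
    rwa [fin4_add] at this

def vLetter (l : Fin 2 × Bool) : Fin 4 :=
  if l.2 then (if l.1 = 0 then 0 else 1) else (if l.1 = 0 then 2 else 3)

noncomputable def vHom (Ψ : X → Fin 4 → X) (hΨ : VInj Ψ) :
    FreeGroup (Fin 2) →* Equiv.Perm (X × Fin 4) :=
  FreeGroup.lift (fun g => vPerm Ψ hΨ (vLetter (g, true)))

theorem vLetter_not (l : Fin 2 × Bool) : vLetter (l.1, !l.2) = vLetter l + 2 := by
  revert l; decide

theorem vLetter_red (a b : Fin 2 × Bool) (h : a.1 = b.1 → a.2 = b.2) :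
    vLetter a ≠ vLetter b + 2 := by
  revert a b; decide

theorem vHom_mk (Ψ : X → Fin 4 → X) (hΨ : VInj Ψ) (L : List (Fin 2 × Bool)) (p : X × Fin 4) :
    vHom Ψ hΨ (FreeGroup.mk L) p = L.foldr (fun l p => vAct Ψ (vLetter l) p) p := by
  unfold vHom
  rw [FreeGroup.lift_mk]
  induction L with
  | nil => rfl
  | cons l L ih =>
    rw [List.map_cons, List.prod_cons, Equiv.Perm.mul_apply, ih, List.foldr_cons]
    obtain ⟨g, b⟩ := l
    cases b
    · simp only [cond_false]
      have : vLetter (g, false) = vLetter (g, true) + 2 := vLetter_not (g, true)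
      rw [this]; rfl
    · rfl

noncomputable def vU (Ψ : X → Fin 4 → X) (o : Option (X × Fin 4)) : Option (X × Fin 4) :=
  o.bind (vUp Ψ)

theorem vU_none (Ψ : X → Fin 4 → X) (n : ℕ) : (vU Ψ)^[n] none = none := by
  induction n with
  | zero => rfl
  | succ n ih => rw [Function.iterate_succ_apply]; exact ih

/-- The junction between the ascending and descending parts. -/
def VJunc (Ψ : X → Fin 4 → X) (p c : X × Fin 4) : Prop :=
  vUp Ψ c = some p ∨
  ∃ k v, (vU Ψ)^[k] (some p) = some v ∧ v.2 ≠ c.2 ∧ vUp Ψ v = vUp Ψ c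

def VState (Ψ : X → Fin 4 → X) (p q : X × Fin 4) (s : Fin 4) : Prop :=
  (∃ n v, (vU Ψ)^[n] (some p) = some v ∧ v.2 = s + 2 ∧ vUp Ψ v = some q) ∨
  (q.2 = s ∧ ∃ m c, (vU Ψ)^[m] (some q) = some c ∧ VJunc Ψ p c)

theorem vState_of {Ψ : X → Fin 4 → X} (hΨ : VInj Ψ) (p : X × Fin 4) (l : Fin 2 × Bool)
    (L : List (Fin 2 × Bool)) (hL : FreeGroup.IsReduced (l :: L)) :
    VState Ψ p ((l :: L).foldr (fun l p => vAct Ψ (vLetter l) p) p) (vLetter l) := by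
  induction L generalizing l with
  | nil =>
    simp only [List.foldr_cons, List.foldr_nil]
    by_cases h : p.2 = vLetter l + 2
    · rcases hr : vUp Ψ p with _ | r
      · rw [vAct_root _ p h hr]
        refine Or.inr ⟨rfl, 0, _, rfl, Or.inr ⟨0, p, rfl, ?_, ?_⟩⟩
        · rw [h]; exact fin4_ne _
        · rw [hr]; symm
          obtain ⟨x, t⟩ := p
          rw [vUp_none_iff] at hr ⊢
          exact hr
      · rw [vAct_del _ p r h hr]
        exact Or.inl ⟨0, p, rfl, h, hr⟩
    · obtain ⟨h1, h2⟩ := vAct_add hΨ _ p h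
      exact Or.inr ⟨h2, 0, _, rfl, Or.inl h1⟩
  | cons l' L ih =>
    rw [FreeGroup.isReduced_cons_cons] at hL
    have hs := vLetter_red _ _ hL.1
    have := ih l' hL.2
    rw [List.foldr_cons]
    generalize (l' :: L).foldr (fun l p => vAct Ψ (vLetter l) p) p = q at this ⊢
    generalize vLetter l = s' at *
    generalize vLetter l' = s at *
    rcases this with ⟨n, v, h1, h2, h3⟩ | ⟨h1, m, c, h2, h3⟩
    · have h4 : (vU Ψ)^[n+1] (some p) = some q := by
        rw [Function.iterate_succ_apply', h1]; exact h3
      by_cases h : q.2 = s' + 2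
      · rcases hr : vUp Ψ q with _ | r
        · rw [vAct_root _ q h hr]
          refine Or.inr ⟨rfl, 0, _, rfl, Or.inr ⟨n + 1, q, h4, ?_, ?_⟩⟩
          · rw [h]; exact fin4_ne _
          · rw [hr]; symm
            obtain ⟨x, t⟩ := q
            rw [vUp_none_iff] at hr ⊢
            exact hr
        · rw [vAct_del _ q r h hr]
          exact Or.inl ⟨n + 1, q, h4, h, hr⟩
      · obtain ⟨h5, h6⟩ := vAct_add hΨ _ q h
        refine Or.inr ⟨h6, 0, _, rfl, Or.inr ⟨n, v, h1, ?_, ?_⟩⟩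
        · rw [h2, h6]; exact hs.symm
        · rw [h3, h5]
    · have h : q.2 ≠ s' + 2 := by
        rw [h1]; intro h; apply hs; rw [h, fin4_add]
      obtain ⟨h5, h6⟩ := vAct_add hΨ _ q h
      refine Or.inr ⟨h6, m + 1, c, ?_, h3⟩
      rw [Function.iterate_succ_apply]
      change (vU Ψ)^[m] (vUp Ψ _) = _
      rw [h5, h2]

theorem vAcyc_eq {Ψ : X → Fin 4 → X} (hac : ∀ n p, (vU Ψ)^[n+1] (some p) ≠ some p)
    {k m : ℕ} {p u : X × Fin 4} (hk : (vU Ψ)^[k] (some p) = some u)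
    (hm : (vU Ψ)^[m] (some p) = some u) : k = m := by
  wlog h : k ≤ m generalizing k m
  · exact (this hm hk (le_of_not_ge h)).symm
  obtain ⟨d, rfl⟩ := Nat.exists_eq_add_of_le h
  rcases d with _ | d
  · rfl
  · exfalso
    rw [add_comm, Function.iterate_add_apply, hk] at hm
    exact hac d u hm

theorem vState_ne {Ψ : X → Fin 4 → X} (hac : ∀ n p, (vU Ψ)^[n+1] (some p) ≠ some p)
    {p q : X × Fin 4} {s : Fin 4} (h : VState Ψ p q s) : q ≠ p := by
  rintro rfl
  rcases h with ⟨n, v, h1, h2, h3⟩ | ⟨h1, m, c, h2, h3⟩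
  · apply hac n q
    rw [Function.iterate_succ_apply', h1]; exact h3
  · rcases h3 with h3 | ⟨k, v, h3, h4, h5⟩
    · apply hac m q
      rw [Function.iterate_succ_apply', h2]; exact h3
    · have e1 : (vU Ψ)^[m+1] (some q) = vUp Ψ c := by
        rw [Function.iterate_succ_apply', h2]; rfl
      have e2 : (vU Ψ)^[k+1] (some q) = vUp Ψ v := by
        rw [Function.iterate_succ_apply', h3]; rfl
      have hkm : k = m := by
        rcases hc : vUp Ψ c with _ | u
        · rw [hc] at e1; rw [h5, hc] at e2
          rcases lt_trichotomy k m with h | h | h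
          · exfalso
            obtain ⟨d, rfl⟩ := Nat.exists_eq_add_of_le (Nat.succ_le_of_lt h)
            rw [add_comm, Function.iterate_add_apply, e2, vU_none] at h2
            simp at h2
          · exact h
          · exfalso
            obtain ⟨d, rfl⟩ := Nat.exists_eq_add_of_le (Nat.succ_le_of_lt h)
            rw [add_comm, Function.iterate_add_apply, e1, vU_none] at h3
            simp at h3
        · rw [hc] at e1; rw [h5, hc] at e2
          have := vAcyc_eq hac e1 e2
          omega
      subst hkm
      rw [h2] at h3
      simp only [Option.some.injEq] at h3
      exact h4 (by rw [h3])

theorem vHom_free {Ψ : X → Fin 4 → X} (hΨ : VInj Ψ)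
    (hac : ∀ n p, (vU Ψ)^[n+1] (some p) ≠ some p) (w : FreeGroup (Fin 2)) (hw : w ≠ 1)
    (p : X × Fin 4) : vHom Ψ hΨ w p ≠ p := by
  rw [← FreeGroup.mk_toWord (x := w), vHom_mk]
  have hr : FreeGroup.IsReduced w.toWord := FreeGroup.isReduced_toWord
  rcases hL : w.toWord with _ | ⟨l, L⟩
  · exact absurd (FreeGroup.toWord_eq_nil_iff.1 hL) hw
  · rw [hL] at hr
    exact vState_ne hac (vState_of hΨ p l L hr)
end PartA1
set_option linter.unusedSectionVars false
section PartA2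
variable {X Γ : Type*} [Group Γ] [Countable Γ] [MulAction Γ X] [MeasurableSpace X]

theorem v_pieces {Y Z ι : Type*} [MeasurableSpace Y] [MeasurableSpace Z] [Countable ι]
    (k : ι → Y → Z) (hk : ∀ n, Measurable (k n)) (E : ι → Set Y) (hE : ∀ n, MeasurableSet (E n))
    (g : Y → Z) (hg : ∀ n, ∀ y ∈ E n, g y = k n y) (hc : ∀ y, ∃ n, y ∈ E n) : Measurable g := by
  intro s hs
  have : g ⁻¹' s = ⋃ n, (E n ∩ k n ⁻¹' s) := by
    ext y
    simp only [Set.mem_preimage, Set.mem_iUnion, Set.mem_inter_iff]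
    constructor
    · intro h
      obtain ⟨n, hn⟩ := hc y
      exact ⟨n, hn, by rw [← hg n y hn]; exact h⟩
    · rintro ⟨n, hn, h⟩
      rw [hg n y hn]; exact h
  rw [this]
  exact MeasurableSet.iUnion fun n => (hE n).inter (hk n hs)

theorem v_eqset {Y : Type*} [MeasurableSpace Y] {e : X → ℝ} (he : Measurable e)
    (hei : Function.Injective e) {f g : Y → X} (hf : Measurable f) (hg : Measurable g) :
    MeasurableSet {y | f y = g y} := by
  have : {y | f y = g y} = {y | e (f y) = e (g y)} := by
    ext y; exact hei.eq_iff.symm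
  rw [this]
  exact measurableSet_eq_fun (he.comp hf) (he.comp hg)

/-- the Cantor–Schröder–Bernstein set -/
def vC (Φ : X → Fin 4 → X) : Set X :=
  {y | ∃ (n : ℕ) (x : X) (i : Fin 4), i ≠ 0 ∧ y = (fun z => Φ z 0)^[n] (Φ x i)}

theorem v_iter_lip (φ : X → X) (hφ : ∀ x, ∃ γ : Γ, φ x = γ • x) (n : ℕ) (x : X) :
    ∃ γ : Γ, φ^[n] x = γ • x := by
  induction n with
  | zero => exact ⟨1, by simp⟩
  | succ n ih =>
    obtain ⟨γ, h⟩ := ih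
    obtain ⟨δ, h'⟩ := hφ (φ^[n] x)
    exact ⟨δ * γ, by rw [Function.iterate_succ_apply', h', h, mul_smul]⟩

theorem vC_meas (hmeas : ∀ γ : Γ, Measurable (fun x : X => γ • x)) {e : X → ℝ}
    (he : Measurable e) (hei : Function.Injective e) (Φ : X → Fin 4 → X)
    (hΦS : ∀ x i, ∃ γ : Γ, Φ x i = γ • x) (hΦm : ∀ i, Measurable (fun x => Φ x i)) :
    MeasurableSet (vC Φ) := by
  have : vC Φ = ⋃ (n : ℕ) (i : Fin 4) (_ : i ≠ 0) (γ : Γ),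
      {y | y = (fun z => Φ z 0)^[n] (Φ (γ • y) i)} := by
    ext y
    simp only [vC, Set.mem_ofPred_eq, Set.mem_iUnion]
    constructor
    · rintro ⟨n, x, i, hi, h⟩
      obtain ⟨γ, h1⟩ := v_iter_lip (Γ := Γ) (fun z => Φ z 0) (fun x => hΦS x 0) n (Φ x i)
      obtain ⟨δ, h2⟩ := hΦS x i
      refine ⟨n, i, hi, (γ * δ)⁻¹, ?_⟩
      have : (γ * δ)⁻¹ • y = x := by rw [h, h1, h2, inv_smul_eq_iff, mul_smul]
      rw [this]; exact h
    · rintro ⟨n, i, hi, γ, h⟩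
      exact ⟨n, _, i, hi, h⟩
  rw [this]
  refine MeasurableSet.iUnion fun n => MeasurableSet.iUnion fun i => MeasurableSet.iUnion fun _ =>
    MeasurableSet.iUnion fun γ => ?_
  exact v_eqset he hei measurable_id (((hΦm 0).iterate n).comp ((hΦm i).comp (hmeas γ)))

open Classical in
noncomputable def vTh (Φ : X → Fin 4 → X) (p : X × Fin 4) : X :=
  if p.2 = 0 ∧ p.1 ∉ vC Φ then p.1 else Φ p.1 p.2

theorem vTh_bij (Φ : X → Fin 4 → X) (hΦ : ∀ x y i j, Φ x i = Φ y j → x = y ∧ i = j) :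
    Function.Bijective (vTh Φ) := by
  have hC : ∀ x i, ¬ (i = 0 ∧ x ∉ vC Φ) → Φ x i ∈ vC Φ := by
    intro x i h
    by_cases hi : i = 0
    · subst hi
      have : x ∈ vC Φ := by by_contra h'; exact h ⟨rfl, h'⟩
      obtain ⟨n, z, j, hj, h2⟩ := this
      exact ⟨n + 1, z, j, hj, by rw [Function.iterate_succ_apply', ← h2]⟩
    · exact ⟨0, x, i, hi, rfl⟩
  constructor
  · rintro ⟨x, i⟩ ⟨y, j⟩ h
    unfold vTh at h
    dsimp only at h
    split_ifs at h with h1 h2 h2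
    · rw [h, h1.1, h2.1]
    · exact absurd (h ▸ hC y j h2) h1.2
    · exact absurd (h ▸ hC x i h1) h2.2
    · obtain ⟨h3, h4⟩ := hΦ _ _ _ _ h
      rw [h3, h4]
  · intro y
    by_cases hy : y ∈ vC Φ
    · obtain ⟨n, x, i, hi, h⟩ := hy
      rcases n with _ | n
      · exact ⟨(x, i), by unfold vTh; rw [if_neg (fun h => hi h.1)]; exact h.symm⟩
      · refine ⟨((fun z => Φ z 0)^[n] (Φ x i), 0), ?_⟩
        unfold vTh
        rw [if_neg]
        · rw [h, Function.iterate_succ_apply']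
        · rintro ⟨-, h'⟩
          exact h' ⟨n, x, i, hi, rfl⟩
    · exact ⟨(y, 0), by unfold vTh; rw [if_pos ⟨rfl, hy⟩]⟩

theorem vUpD_meas (hmeas : ∀ γ : Γ, Measurable (fun x : X => γ • x)) {e : X → ℝ}
    (he : Measurable e) (hei : Function.Injective e) (Ψ : X → Fin 4 → X) (hΨ : VInj Ψ)
    (hΨS : ∀ x i, ∃ γ : Γ, Ψ x i = γ • x) (hΨm : ∀ i, Measurable (fun x => Ψ x i))
    (t s : Fin 4) : Measurable (fun x => (vUp Ψ (x, t)).getD (x, s)) := by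
  have hE : ∀ (γ : Γ) (i : Fin 4), MeasurableSet {x | i ≠ 0 ∧ Ψ (γ • x) i = x} := by
    intro γ i
    exact MeasurableSet.inter (MeasurableSet.const _)
      (v_eqset he hei ((hΨm i).comp (hmeas γ)) measurable_id)
  refine v_pieces (ι := Option (Γ × Fin 4))
    (fun o x => match o with
      | none => (x, s)
      | some q => (q.1 • x, q.2 + t + 2)) ?_
    (fun o => match o with
      | none => (⋃ q : Γ × Fin 4, {x | q.2 ≠ 0 ∧ Ψ (q.1 • x) q.2 = x})ᶜ
      | some q => {x | q.2 ≠ 0 ∧ Ψ (q.1 • x) q.2 = x}) ?_ _ ?_ ?_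
  · rintro (_ | q)
    · exact measurable_id.prodMk measurable_const
    · exact (hmeas q.1).prodMk measurable_const
  · rintro (_ | q)
    · exact (MeasurableSet.iUnion fun q : Γ × Fin 4 => hE q.1 q.2).compl
    · exact hE q.1 q.2
  · rintro (_ | q) x hx
    · have : vUp Ψ (x, t) = none := by
        rw [vUp_none_iff]
        rintro ⟨p, hp, h⟩
        obtain ⟨γ, h2⟩ := hΨS p.1 p.2
        apply hx
        rw [Set.mem_iUnion]
        refine ⟨(γ⁻¹, p.2), hp, ?_⟩
        have : γ⁻¹ • x = p.1 := by rw [← h, h2, inv_smul_smul]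
        dsimp only
        rw [this]; exact h
      dsimp only
      rw [this]; rfl
    · obtain ⟨h1, h2⟩ := hx
      have := vUp_of hΨ (q.1 • x) q.2 t h1
      rw [h2] at this
      dsimp only
      rw [this]; rfl
  · intro x
    by_cases h : x ∈ ⋃ q : Γ × Fin 4, {x | q.2 ≠ 0 ∧ Ψ (q.1 • x) q.2 = x}
    · rw [Set.mem_iUnion] at h
      obtain ⟨q, hq⟩ := h
      exact ⟨some q, hq⟩
    · exact ⟨none, h⟩

def VNice (Γ : Type*) [Group Γ] [MulAction Γ X] (h : X × Fin 4 → X × Fin 4) : Prop :=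
  Measurable h ∧ ∃ S : Finset Γ, ∀ p, ∃ γ ∈ S, (h p).1 = γ • p.1

theorem VNice.comp {h k : X × Fin 4 → X × Fin 4} (hh : VNice Γ h) (hk : VNice Γ k) :
    VNice Γ (h ∘ k) := by
  classical
  obtain ⟨h1, S, hS⟩ := hh
  obtain ⟨k1, T, hT⟩ := hk
  refine ⟨h1.comp k1, S * T, fun p => ?_⟩
  obtain ⟨γ, hγ, e1⟩ := hS (k p)
  obtain ⟨δ, hδ, e2⟩ := hT p
  exact ⟨γ * δ, Finset.mul_mem_mul hγ hδ, by rw [Function.comp_apply, e1, e2, mul_smul]⟩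

theorem vAct_nice (hmeas : ∀ γ : Γ, Measurable (fun x : X => γ • x)) {e : X → ℝ}
    (he : Measurable e) (hei : Function.Injective e) (Ψ : X → Fin 4 → X) (hΨ : VInj Ψ)
    (S : Finset Γ)
    (hΨS : ∀ x i, ∃ γ ∈ S, Ψ x i = γ • x) (hΨm : ∀ i, Measurable (fun x => Ψ x i))
    (s : Fin 4) : VNice Γ (vAct Ψ s) := by
  classical
  refine ⟨?_, insert 1 (S ∪ S⁻¹), ?_⟩
  · refine measurable_from_prod_countable_left fun t => ?_
    unfold vAct
    dsimp only
    by_cases h : t ≠ s + 2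
    · simp only [if_pos h]
      exact (hΨm _).prodMk measurable_const
    · simp only [if_neg h]
      exact vUpD_meas hmeas he hei Ψ hΨ (fun x i => let ⟨γ, _, h⟩ := hΨS x i; ⟨γ, h⟩) hΨm t s
  · intro p
    by_cases h : p.2 = s + 2
    · rcases hr : vUp Ψ p with _ | r
      · rw [vAct_root s p h hr]
        exact ⟨1, by simp, by simp⟩
      · rw [vAct_del s p r h hr]
        obtain ⟨i, hi, h1, h2⟩ := vUp_some hr
        obtain ⟨γ, hγ, h3⟩ := hΨS r.1 i
        refine ⟨γ⁻¹, by simp [hγ], ?_⟩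
        rw [← h1, h3, inv_smul_smul]
    · unfold vAct
      rw [if_pos h]
      obtain ⟨γ, hγ, h3⟩ := hΨS p.1 (p.2 - (s + 2))
      exact ⟨γ, by simp [hγ], h3⟩

theorem vHom_nice (hmeas : ∀ γ : Γ, Measurable (fun x : X => γ • x)) {e : X → ℝ}
    (he : Measurable e) (hei : Function.Injective e) (Ψ : X → Fin 4 → X) (hΨ : VInj Ψ)
    (S : Finset Γ)
    (hΨS : ∀ x i, ∃ γ ∈ S, Ψ x i = γ • x) (hΨm : ∀ i, Measurable (fun x => Ψ x i))
    (w : FreeGroup (Fin 2)) : VNice Γ (vHom Ψ hΨ w) := by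
  have key : ∀ L : List (Fin 2 × Bool), VNice Γ (vHom Ψ hΨ (FreeGroup.mk L)) := by
    intro L
    have : ⇑(vHom Ψ hΨ (FreeGroup.mk L)) =
      fun p => L.foldr (fun l p => vAct Ψ (vLetter l) p) p := funext fun p => vHom_mk Ψ hΨ L p
    rw [this]
    induction L with
    | nil => exact ⟨measurable_id, {1}, fun p => ⟨1, by simp, by simp⟩⟩
    | cons l L ih =>
      exact (vAct_nice hmeas he hei Ψ hΨ S hΨS hΨm (vLetter l)).comp
        (ih (funext fun p => vHom_mk Ψ hΨ L p))
  have := key w.toWord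
  rwa [FreeGroup.mk_toWord] at this

open Classical in
noncomputable def vPar (Φ : X → Fin 4 → X) (y : X) : X :=
  if h : ∃ p : X × Fin 4, Φ p.1 p.2 = y then h.choose.1 else y

theorem vPar_of {Φ : X → Fin 4 → X} (hΦ : ∀ x y i j, Φ x i = Φ y j → x = y ∧ i = j)
    (x : X) (i : Fin 4) : vPar Φ (Φ x i) = x := by
  have h : ∃ p : X × Fin 4, Φ p.1 p.2 = Φ x i := ⟨(x, i), rfl⟩
  unfold vPar
  rw [dif_pos h]
  exact (hΦ _ _ _ _ h.choose_spec).1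

theorem vPar_meas (hmeas : ∀ γ : Γ, Measurable (fun x : X => γ • x)) {e : X → ℝ}
    (he : Measurable e) (hei : Function.Injective e) (Φ : X → Fin 4 → X)
    (hΦ : ∀ x y i j, Φ x i = Φ y j → x = y ∧ i = j)
    (hΦS : ∀ x i, ∃ γ : Γ, Φ x i = γ • x) (hΦm : ∀ i, Measurable (fun x => Φ x i)) :
    MeasurableSet {y | ∃ p : X × Fin 4, Φ p.1 p.2 = y} ∧ Measurable (vPar Φ) := by
  have hE : ∀ (q : Γ × Fin 4), MeasurableSet {x | Φ (q.1 • x) q.2 = x} := by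
    intro q
    exact (v_eqset he hei ((hΦm q.2).comp (hmeas q.1)) measurable_id)
  have hD : {y | ∃ p : X × Fin 4, Φ p.1 p.2 = y} = ⋃ q : Γ × Fin 4, {x | Φ (q.1 • x) q.2 = x} := by
    ext y
    simp only [Set.mem_ofPred_eq, Set.mem_iUnion]
    constructor
    · rintro ⟨p, h⟩
      obtain ⟨γ, h2⟩ := hΦS p.1 p.2
      have : γ⁻¹ • y = p.1 := by rw [← h, h2, inv_smul_smul]
      exact ⟨(γ⁻¹, p.2), by dsimp only; rw [this]; exact h⟩
    · rintro ⟨q, h⟩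
      exact ⟨(q.1 • y, q.2), h⟩
  have hDm : MeasurableSet {y | ∃ p : X × Fin 4, Φ p.1 p.2 = y} := by
    rw [hD]; exact MeasurableSet.iUnion hE
  refine ⟨hDm, ?_⟩
  refine v_pieces (ι := Option (Γ × Fin 4))
    (fun o x => match o with
      | none => x
      | some q => (q.1 • x)) ?_
    (fun o => match o with
      | none => {y | ∃ p : X × Fin 4, Φ p.1 p.2 = y}ᶜ
      | some q => {x | Φ (q.1 • x) q.2 = x}) ?_ _ ?_ ?_
  · rintro (_ | q)
    · exact measurable_id
    · exact (hmeas q.1)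
  · rintro (_ | q)
    · exact hDm.compl
    · exact hE q
  · rintro (_ | q) x hx
    · have hx' : ¬ ∃ p : X × Fin 4, Φ p.1 p.2 = x := hx
      exact dif_neg hx'
    · have := vPar_of hΦ (q.1 • x) q.2
      dsimp only at hx ⊢
      rw [hx] at this
      exact this
  · intro x
    by_cases h : x ∈ {y | ∃ p : X × Fin 4, Φ p.1 p.2 = y}
    · have h' := h
      rw [hD, Set.mem_iUnion] at h'
      obtain ⟨q, hq⟩ := h'
      exact ⟨some q, hq⟩
    · exact ⟨none, h⟩

/-- Selected points on cycles. -/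
def vT (e : X → ℝ) (Φ : X → Fin 4 → X) : Set X :=
  {y | (∃ p : X × Fin 4, Φ p.1 p.2 = y) ∧ (∀ n : ℕ, e y ≤ e ((vPar Φ)^[n] y)) ∧
    ∃ n : ℕ, (vPar Φ)^[n + 1] y = y}

theorem vT_meas (hmeas : ∀ γ : Γ, Measurable (fun x : X => γ • x)) {e : X → ℝ}
    (he : Measurable e) (hei : Function.Injective e) (Φ : X → Fin 4 → X)
    (hΦ : ∀ x y i j, Φ x i = Φ y j → x = y ∧ i = j)
    (hΦS : ∀ x i, ∃ γ : Γ, Φ x i = γ • x) (hΦm : ∀ i, Measurable (fun x => Φ x i)) :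
    MeasurableSet (vT e Φ) := by
  obtain ⟨h1, h2⟩ := vPar_meas hmeas he hei Φ hΦ hΦS hΦm
  have : vT e Φ = {y | ∃ p : X × Fin 4, Φ p.1 p.2 = y} ∩
    ((⋂ n : ℕ, {y | e y ≤ e ((vPar Φ)^[n] y)}) ∩ ⋃ n : ℕ, {y | (vPar Φ)^[n + 1] y = y}) := by
    ext y; simp [vT]
  rw [this]
  refine h1.inter ((MeasurableSet.iInter fun n => ?_).inter (MeasurableSet.iUnion fun n => ?_))
  · exact measurableSet_le he (he.comp (h2.iterate n))
  · exact v_eqset he hei (h2.iterate _) measurable_id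

theorem vT_unique {e : X → ℝ} (hei : Function.Injective e) {Φ : X → Fin 4 → X}
    (hΦ : ∀ x y i j, Φ x i = Φ y j → x = y ∧ i = j) (x : X) (i j : Fin 4)
    (hi : Φ x i ∈ vT e Φ) (hj : Φ x j ∈ vT e Φ) : i = j := by
  have key : ∀ i j, Φ x i ∈ vT e Φ → Φ x j ∈ vT e Φ → e (Φ x i) ≤ e (Φ x j) := by
    intro i j hi hj
    obtain ⟨-, -, n, hn⟩ := hj
    obtain ⟨-, h1, -⟩ := hi
    have h2 := h1 (n + 1)
    rw [Function.iterate_succ_apply, vPar_of hΦ] at h2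
    rw [Function.iterate_succ_apply, vPar_of hΦ] at hn
    rwa [hn] at h2
  exact (hΦ _ _ _ _ (hei (le_antisymm (key i j hi hj) (key j i hj hi)))).2

open Classical in
noncomputable def vJ (e : X → ℝ) (Φ : X → Fin 4 → X) (x : X) : Fin 4 :=
  if Φ x 1 ∈ vT e Φ then 1 else if Φ x 2 ∈ vT e Φ then 2 else if Φ x 3 ∈ vT e Φ then 3 else 0

theorem vJ_spec {e : X → ℝ} (hei : Function.Injective e) {Φ : X → Fin 4 → X}
    (hΦ : ∀ x y i j, Φ x i = Φ y j → x = y ∧ i = j) (x : X) (i : Fin 4)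
    (hi : Φ x i ∈ vT e Φ) : vJ e Φ x = i := by
  have hu := fun j => vT_unique hei hΦ x i j hi
  unfold vJ
  split_ifs with h1 h2 h3
  · exact (hu _ h1).symm
  · exact (hu _ h2).symm
  · exact (hu _ h3).symm
  · fin_cases i
    · rfl
    · exact absurd hi h1
    · exact absurd hi h2
    · exact absurd hi h3

theorem vAcyclic {e : X → ℝ} (hei : Function.Injective e) {Φ : X → Fin 4 → X}
    (hΦ : ∀ x y i j, Φ x i = Φ y j → x = y ∧ i = j) (n : ℕ) (p : X × Fin 4) :
    (vU (fun x i => Φ x (vJ e Φ x + i)))^[n + 1] (some p) ≠ some p := by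
  set Ψ : X → Fin 4 → X := fun x i => Φ x (vJ e Φ x + i) with hΨdef
  intro hn
  have hsome : ∀ k, ∃ q, (vU Ψ)^[k] (some p) = some q := by
    intro k
    by_contra h
    push Not at h
    have h0 : (vU Ψ)^[k] (some p) = none := Option.eq_none_iff_forall_ne_some.2 h
    have h1 : ((vU Ψ)^[n+1])^[k] (some p) = some p := Function.iterate_fixed hn k
    rw [← Function.iterate_mul, show (n + 1) * k = n * k + k by ring,
      Function.iterate_add_apply, h0, vU_none] at h1
    simp at h1
  choose q hq using hsome
  have hup : ∀ k, vUp Ψ (q k) = some (q (k + 1)) := by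
    intro k
    have := hq (k + 1)
    rw [Function.iterate_succ_apply', hq k] at this
    exact this
  have hx : ∀ k, (q k).1 ∉ vT e Φ ∧ (∃ p : X × Fin 4, Φ p.1 p.2 = (q k).1) ∧
      vPar Φ (q k).1 = (q (k + 1)).1 := by
    intro k
    obtain ⟨i, hi, h1, h2⟩ := vUp_some (hup k)
    rw [← h1]
    refine ⟨?_, ⟨((q (k+1)).1, vJ e Φ (q (k+1)).1 + i), rfl⟩, vPar_of hΦ _ _⟩
    intro h
    have := vJ_spec hei hΦ _ _ h
    exact hi (by simpa using this)
  have hq0 : q 0 = p := by simpa using (hq 0).symm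
  have hqn : q (n + 1) = p := by
    have := hq (n + 1); rw [hn] at this; simpa using this.symm
  have hit : ∀ k, (vPar Φ)^[k] p.1 = (q k).1 := by
    intro k
    induction k with
    | zero => simp [hq0]
    | succ k ih => rw [Function.iterate_succ_apply', ih, (hx k).2.2]
  have hper : Function.IsPeriodicPt (vPar Φ) (n + 1) p.1 := by
    change (vPar Φ)^[n + 1] p.1 = p.1
    rw [hit, hqn]
  obtain ⟨k, hk, hmin⟩ := Finset.exists_min_image (Finset.range (n + 1))
    (fun k => e ((vPar Φ)^[k] p.1)) ⟨0, by simp⟩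
  apply (hx k).1
  refine ⟨(hx k).2.1, ?_, n, ?_⟩
  · intro m
    rw [← hit, ← Function.iterate_add_apply, ← hper.iterate_mod_apply (m + k)]
    exact hmin _ (Finset.mem_range.2 (Nat.mod_lt _ (Nat.succ_pos n)))
  · rw [← hit, ← Function.iterate_add_apply, add_comm, Function.iterate_add_apply]
    rw [show (vPar Φ)^[n+1] p.1 = p.1 from hper]

theorem partA (hmeas : ∀ γ : Γ, Measurable (fun x : X => γ • x)) {e : X → ℝ}
    (he : Measurable e) (hei : Function.Injective e) (S : Finset Γ) (Φ : X → Fin 4 → X)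
    (hΦ : ∀ x y i j, Φ x i = Φ y j → x = y ∧ i = j)
    (hΦS : ∀ x i, ∃ γ ∈ S, Φ x i = γ • x) (hΦm : ∀ i, Measurable (fun x => Φ x i)) :
    ∃ b : FreeGroup (Fin 2) →* Equiv.Perm X, (∀ w, Measurable (b w)) ∧
      (∀ w, w ≠ 1 → ∀ x, b w x ≠ x) ∧
      (∀ w, ∃ S : Finset Γ, ∀ x, ∃ γ ∈ S, b w x = γ • x) := by
  classical
  have hΦS' : ∀ x i, ∃ γ : Γ, Φ x i = γ • x := fun x i => let ⟨γ, _, h⟩ := hΦS x i; ⟨γ, h⟩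
  set Ψ : X → Fin 4 → X := fun x i => Φ x (vJ e Φ x + i) with hΨdef
  have hΨ : VInj Ψ := by
    intro x y i j _ _ h
    obtain ⟨h1, h2⟩ := hΦ _ _ _ _ h
    subst h1
    exact ⟨rfl, by simpa using h2⟩
  have hT := vT_meas hmeas he hei Φ hΦ hΦS' hΦm
  have hJ : Measurable (vJ e Φ) := by
    unfold vJ
    refine Measurable.ite (hΦm 1 hT) measurable_const (Measurable.ite (hΦm 2 hT) measurable_const
      (Measurable.ite (hΦm 3 hT) measurable_const measurable_const))
  have hΨm : ∀ i, Measurable (fun x => Ψ x i) := by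
    intro i
    refine v_pieces (fun (j : Fin 4) x => Φ x (j + i)) (fun j => hΦm _)
      (fun j => vJ e Φ ⁻¹' {j}) (fun j => hJ (measurableSet_singleton j)) _ ?_ ?_
    · intro j x hx
      have : vJ e Φ x = j := hx
      simp only [hΨdef, this]
    · intro x; exact ⟨_, rfl⟩
  have hΨS : ∀ x i, ∃ γ ∈ S, Ψ x i = γ • x := fun x i => hΦS _ _
  have hac := vAcyclic hei hΦ
  let θ : X × Fin 4 ≃ X := Equiv.ofBijective _ (vTh_bij Φ hΦ)
  have hθ1 : Measurable θ := by
    change Measurable (vTh Φ)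
    refine measurable_from_prod_countable_left fun t => ?_
    unfold vTh
    refine Measurable.ite ?_ measurable_id (hΦm t)
    have h7 : MeasurableSet {x : X | t = 0 ∧ x ∉ vC Φ} := (MeasurableSet.const _).inter (vC_meas hmeas he hei Φ hΦS' hΦm).compl
    exact h7
  have hθ2 : ∀ p, ∃ γ ∈ insert 1 S, θ p = γ • p.1 := by
    intro p
    change ∃ γ ∈ insert 1 S, vTh Φ p = γ • p.1
    unfold vTh
    split_ifs
    · exact ⟨1, by simp, by simp⟩
    · obtain ⟨γ, hγ, h⟩ := hΦS p.1 p.2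
      exact ⟨γ, by simp [hγ], h⟩
  have hθ4 : ∀ x, ∃ γ ∈ (insert 1 S)⁻¹, (θ.symm x).1 = γ • x := by
    intro x
    obtain ⟨γ, hγ, h⟩ := hθ2 (θ.symm x)
    rw [Equiv.apply_symm_apply] at h
    exact ⟨γ⁻¹, by simpa using hγ, by rw [eq_inv_smul_iff, ← h]⟩
  have hθ3 : Measurable θ.symm := by
    refine v_pieces (fun (q : Γ × Fin 4) x => (q.1 • x, q.2))
      (fun q => (hmeas q.1).prodMk measurable_const)
      (fun q => {x | θ (q.1 • x, q.2) = x}) (fun q => v_eqset he hei (hθ1.comp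
        ((hmeas q.1).prodMk measurable_const)) measurable_id) _ ?_ ?_
    · intro q x hx
      rw [Equiv.symm_apply_eq]; exact hx.symm
    · intro x
      obtain ⟨γ, hγ, h⟩ := hθ4 x
      refine ⟨(γ, (θ.symm x).2), ?_⟩
      change θ (γ • x, (θ.symm x).2) = x
      rw [← h]; simp
  refine ⟨(θ.permCongrHom).toMonoidHom.comp (vHom Ψ hΨ), ?_, ?_, ?_⟩
  · intro w
    exact hθ1.comp ((vHom_nice hmeas he hei Ψ hΨ S hΨS hΨm w).1.comp hθ3)
  · intro w hw x h
    apply vHom_free hΨ hac w hw (θ.symm x)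
    change θ (vHom Ψ hΨ w (θ.symm x)) = x at h
    exact (Equiv.eq_symm_apply θ).2 h
  · intro w
    obtain ⟨-, R, hR⟩ := vHom_nice hmeas he hei Ψ hΨ S hΨS hΨm w
    refine ⟨insert 1 S * (R * (insert 1 S)⁻¹), fun x => ?_⟩
    obtain ⟨γ₁, h1, e1⟩ := hθ4 x
    obtain ⟨γ₂, h2, e2⟩ := hR (θ.symm x)
    obtain ⟨γ₃, h3, e3⟩ := hθ2 (vHom Ψ hΨ w (θ.symm x))
    refine ⟨γ₃ * (γ₂ * γ₁), Finset.mul_mem_mul h3 (Finset.mul_mem_mul h2 h1), ?_⟩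
    change θ (vHom Ψ hΨ w (θ.symm x)) = _
    rw [e3, e2, e1, mul_smul, mul_smul]
end PartA2
set_option linter.unusedSectionVars false
section PartB
variable {X Γ : Type*} [Group Γ] [Countable Γ] [MulAction Γ X] [TopologicalSpace X] [PolishSpace X]
  [MeasurableSpace X] [BorelSpace X]

theorem b_open_nonmeagre {O : Set X} (hO : IsOpen O) (hne : O.Nonempty) : ¬ IsMeagre O := by
  intro h
  have h1 : Dense Oᶜ := dense_of_mem_residual h
  obtain ⟨x, hx, hx'⟩ := h1.inter_open_nonempty O hO hne
  exact hx' hx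

theorem b_residual {Q : Set X} (hQ : MeasurableSet Q)
    (h : ∀ O ∈ TopologicalSpace.countableBasis X, O.Nonempty → ¬ IsMeagre (O ∩ Q)) :
    Q ∈ residual X := by
  obtain ⟨U, hU, hQU⟩ := hQ.residualEq_isOpen
  have hd : Dense U := by
    rw [(TopologicalSpace.isBasis_countableBasis X).dense_iff]
    intro O hO hne
    by_contra hem
    rw [Set.not_nonempty_iff_eq_empty] at hem
    apply h O hO hne
    change (O ∩ Q)ᶜ ∈ residual X
    filter_upwards [hQU] with x hx hxO
    have : x ∈ U := by
      have h2 : Q x ↔ U x := iff_of_eq hx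
      exact h2.1 hxO.2
    have h3 : x ∈ O ∩ U := ⟨hxO.1, this⟩
    rw [hem] at h3
    exact h3
  filter_upwards [hQU, residual_of_dense_open hU hd] with x hx hxU
  have h2 : Q x ↔ U x := iff_of_eq hx
  exact h2.2 hxU

theorem b_sparse (hmeas : ∀ γ : Γ, Measurable (fun x : X => γ • x)) (V : Finset Γ) (γ : Γ)
    {O : Set X} (hO : IsOpen O) (hne : O.Nonempty) : ∃ A : Set X, MeasurableSet A ∧
      (∀ x ∈ A, ∀ w ∈ V, w • x ∈ A → w • x = x) ∧ ¬ IsMeagre (O ∩ {x | γ • x ∈ A}) := by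
  let C : Set X → Set X := fun U => U ∩ ⋂ w ∈ V, {x | w • x = x} ∪ (fun x => w • x) ⁻¹' Uᶜ
  by_contra hcon
  push Not at hcon
  apply b_open_nonmeagre hO hne
  have hCs : ∀ U, ∀ x ∈ C U, ∀ w ∈ V, w • x ∈ C U → w • x = x := by
    intro U x hx w hw h
    have := Set.mem_iInter₂.1 hx.2 w hw
    rcases this with h1 | h1
    · exact h1
    · exact absurd h.1 h1
  have hCm : ∀ U ∈ TopologicalSpace.countableBasis X, MeasurableSet (C U) := by
    intro U hU
    have hUm := (TopologicalSpace.isOpen_of_mem_countableBasis hU).measurableSet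
    refine hUm.inter (Finset.measurableSet_biInter _ fun w _ => ?_)
    exact (measurableSet_eq_fun (hmeas w) measurable_id).union (hmeas w hUm.compl)
  have hcov : O ⊆ ⋃ U ∈ TopologicalSpace.countableBasis X, O ∩ {x | γ • x ∈ C U} := by
    intro x hx
    classical
    let F : Finset X := (V.image (fun w => w • (γ • x))).erase (γ • x)
    obtain ⟨U, hU, hxU, hUF⟩ := (TopologicalSpace.isBasis_countableBasis X).exists_subset_of_mem_open
      (a := γ • x) (u := (F : Set X)ᶜ) (by simp [F]) F.finite_toSet.isClosed.isOpen_compl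
    refine Set.mem_iUnion₂.2 ⟨U, hU, hx, hxU, ?_⟩
    refine Set.mem_iInter₂.2 fun w hw => ?_
    by_cases hwx : w • (γ • x) = γ • x
    · exact Or.inl hwx
    · right
      intro h
      exact hUF h (Finset.mem_coe.2 (Finset.mem_erase.2 ⟨hwx, Finset.mem_image_of_mem _ hw⟩))
  refine IsMeagre.mono hcov ?_
  exact isMeagre_biUnion (TopologicalSpace.countable_countableBasis X) fun U hU =>
    hcon (C U) (hCm U hU) (hCs U)

theorem partB (hmeas : ∀ γ : Γ, Measurable (fun x : X => γ • x)) (V : ℕ → Finset Γ) :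
    ∃ (A : ℕ → Set X) (slot : ℕ → Fin 4), (∀ n, MeasurableSet (A n)) ∧
      (∀ n, ∀ x ∈ A n, ∀ w ∈ V n, w • x ∈ A n → w • x = x) ∧
      (⋂ (γ : Γ) (i : Fin 4), {x | ∃ n, slot n = i ∧ γ • x ∈ A n}) ∈ residual X := by
  rcases isEmpty_or_nonempty X with hX | hX
  · refine ⟨fun _ => ∅, fun _ => 0, by simp, by simp, ?_⟩
    exact Filter.univ_mem' (fun x => isEmptyElim x)
  let T := Γ × {O : Set X // O ∈ TopologicalSpace.countableBasis X ∧ O.Nonempty} × Fin 4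
  have : Countable {O : Set X // O ∈ TopologicalSpace.countableBasis X ∧ O.Nonempty} :=
    ((TopologicalSpace.countable_countableBasis X).mono (fun O h => h.1)).to_subtype
  have : Nonempty T := by
    obtain ⟨x⟩ := hX
    obtain ⟨U, hU, hxU, -⟩ := (TopologicalSpace.isBasis_countableBasis X).exists_subset_of_mem_open
      (Set.mem_univ x) isOpen_univ
    exact ⟨(1, ⟨U, hU, x, hxU⟩, 0)⟩
  obtain ⟨f, hf⟩ := exists_surjective_nat T
  have := fun n => b_sparse hmeas (V n) (f n).1
    (TopologicalSpace.isOpen_of_mem_countableBasis (f n).2.1.2.1) (f n).2.1.2.2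
  choose A hA1 hA2 hA3 using this
  refine ⟨A, fun n => (f n).2.2, hA1, hA2, ?_⟩
  refine countable_iInter_mem.2 fun γ => countable_iInter_mem.2 fun i => ?_
  apply b_residual
  · have : {x | ∃ n, (f n).2.2 = i ∧ γ • x ∈ A n} = ⋃ (n : ℕ) (_ : (f n).2.2 = i),
        (fun x => γ • x) ⁻¹' A n := by ext x; simp
    rw [this]
    exact MeasurableSet.iUnion fun n => MeasurableSet.iUnion fun _ => hmeas γ (hA1 n)
  · intro O hO hne hm
    obtain ⟨n, hn⟩ := hf (γ, ⟨O, hO, hne⟩, i)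
    have := hA3 n
    rw [hn] at this
    apply this
    refine IsMeagre.mono ?_ hm
    rintro x ⟨hx, hx2⟩
    exact ⟨hx, n, by dsimp only; rw [hn], hx2⟩
end PartB
section PartC1

theorem c_num (n N : ℕ) (f : ℕ → ℕ) (hf : ∀ m, f m ≤ 1 ∨ 2 ^ (m + 3) * f m ≤ N)
    (hn : 2 ^ (n + 3) * 2 ≤ N) : 2 * ∑ m ∈ Finset.range (n + 1), f m ≤ N := by
  have h1 : ∀ m, (f m : ℚ) ≤ 1 + N * (1 / 8 * (1 / 2) ^ m) := by
    intro m
    have hpos : (0 : ℚ) ≤ N * (1 / 8 * (1 / 2) ^ m) := by positivity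
    rcases hf m with h | h
    · have : (f m : ℚ) ≤ 1 := by exact_mod_cast h
      linarith
    · have h' : (2 : ℚ) ^ (m + 3) * f m ≤ N := by exact_mod_cast h
      have h3 : (f m : ℚ) = (2 ^ (m + 3) * f m) * (1 / 8 * (1 / 2) ^ m) := by
        have : (2 : ℚ) ^ (m + 3) * (1 / 8 * (1 / 2) ^ m) = 1 := by
          rw [pow_add, one_div_pow]
          field_simp
          norm_num
        linear_combination -(f m : ℚ) * this
      have h4 : (2 ^ (m + 3) * f m) * (1 / 8 * (1 / 2) ^ m) ≤ (N : ℚ) * (1 / 8 * (1 / 2) ^ m) :=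
        mul_le_mul_of_nonneg_right h' (by positivity)
      linarith
  have h2 : ∀ k, ∑ m ∈ Finset.range k, (f m : ℚ) ≤ k + N * (1 / 4 * (1 - (1 / 2) ^ k)) := by
    intro k
    induction k with
    | zero => simp
    | succ k ih =>
      rw [Finset.sum_range_succ]
      have := h1 k
      push_cast
      rw [pow_succ]
      linarith
  have h3 := h2 (n + 1)
  have h4 : (0 : ℚ) ≤ N * (1 / 2) ^ (n + 1) := by positivity
  have h5 : 4 * (n + 1) ≤ N := by
    have : n + 1 < 2 ^ (n + 1) := Nat.lt_two_pow_self
    have e : 2 ^ (n + 3) * 2 = 8 * 2 ^ (n + 1) := by ring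
    omega
  have h6 : (4 : ℚ) * (n + 1) ≤ N := by exact_mod_cast h5
  have h7 : (2 : ℚ) * ∑ m ∈ Finset.range (n + 1), (f m : ℚ) ≤ N := by
    push_cast at h3
    nlinarith
  exact_mod_cast h7

theorem c_hall {L Y : Type*} [DecidableEq L] [DecidableEq Y] (t T : L → Finset Y)
    (h2 : ∀ F : Finset L, 2 * F.card ≤ (F.biUnion t).card) (hsub : ∀ p, T p ⊆ t p)
    (K : ℕ → Set L) (n : ℕ) (hfree : ∀ p, (∀ m ≤ n, p ∉ K m) → T p = t p)
    (D : ℕ → L → L → Prop) (hD0 : ∀ p, D 0 p p)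
    (hDmono : ∀ k p q, D k p q → D (k + 1) p q)
    (hDadj : ∀ k p q r, D k p q → ¬ Disjoint (t q) (t r) → D (k + 1) p r)
    (hDtri : ∀ k p q r, D k p r → D k q r → D (2 * k) p q)
    (hsp : ∀ m, ∀ p ∈ K m, ∀ q ∈ K m, D (2 * 2 ^ (m + 3)) p q → p = q)
    (hgood : ∀ F : Finset L, (∀ p ∈ F, ∀ q ∈ F, ∃ k, D k p q) →
      (∀ p ∈ F, ∀ q ∈ F, p ∈ K n → q ∈ K n → p = q) → F.card ≤ (F.biUnion T).card)
    (F : Finset L) : F.card ≤ (F.biUnion T).card := by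
  classical
  induction F using Finset.strongInduction with
  | H F ih =>
  by_contra hviol
  push Not at hviol
  -- connectedness
  have hconn : ∀ G ⊆ F, G.Nonempty → G ≠ F → ∃ q ∈ G, ∃ r ∈ F, r ∉ G ∧ ¬ Disjoint (t q) (t r) := by
    intro G hG hne hGF
    by_contra hno
    push Not at hno
    have hss : G ⊂ F := Finset.ssubset_iff_subset_ne.2 ⟨hG, hGF⟩
    have hss2 : F \ G ⊂ F := Finset.sdiff_ssubset hG hne
    have e1 := ih G hss
    have e2 := ih _ hss2
    have hdis : Disjoint (G.biUnion T) ((F \ G).biUnion T) := by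
      rw [Finset.disjoint_biUnion_left]
      intro q hq
      rw [Finset.disjoint_biUnion_right]
      intro r hr
      rw [Finset.mem_sdiff] at hr
      exact Finset.disjoint_of_subset_left (hsub q)
        (Finset.disjoint_of_subset_right (hsub r) (hno q hq r hr.1 hr.2))
    have e3 := Finset.card_union_of_disjoint hdis
    rw [← Finset.union_biUnion, Finset.union_sdiff_of_subset hG] at e3
    have e4 := Finset.card_sdiff_add_card_eq_card hG
    omega
  have hgrow : ∀ p ∈ F, ∀ k, F.filter (D k p) = F ∨ k + 1 ≤ (F.filter (D k p)).card := by
    intro p hp k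
    induction k with
    | zero =>
      right
      exact Finset.card_pos.2 ⟨p, Finset.mem_filter.2 ⟨hp, hD0 p⟩⟩
    | succ k ihk =>
      have hmono : F.filter (D k p) ⊆ F.filter (D (k + 1) p) := by
        intro q hq
        rw [Finset.mem_filter] at hq ⊢
        exact ⟨hq.1, hDmono _ _ _ hq.2⟩
      by_cases hF : F.filter (D k p) = F
      · left
        exact Finset.Subset.antisymm (Finset.filter_subset _ _) (hF.ge.trans hmono)
      · right
        have hc := ihk.resolve_left hF
        have hne : (F.filter (D k p)).Nonempty := Finset.card_pos.1 (by omega)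
        obtain ⟨q, hq, r, hr, hrn, hqr⟩ := hconn _ (Finset.filter_subset _ _) hne hF
        have : F.filter (D k p) ⊂ F.filter (D (k + 1) p) := by
          rw [Finset.ssubset_iff_of_subset hmono]
          exact ⟨r, Finset.mem_filter.2 ⟨hr, hDadj _ _ _ _ (Finset.mem_filter.1 hq).2 hqr⟩, hrn⟩
        have := Finset.card_lt_card this
        omega
  have hall : ∀ p ∈ F, ∀ q ∈ F, ∃ k, D k p q := by
    intro p hp q hq
    refine ⟨F.card, ?_⟩
    have : F.filter (D F.card p) = F := by
      rcases hgrow p hp F.card with h | h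
      · exact h
      · have := Finset.card_le_card (Finset.filter_subset (D F.card p) F)
        omega
    rw [← this] at hq
    exact (Finset.mem_filter.1 hq).2
  have hcount : ∀ m, 2 ≤ (F.filter (· ∈ K m)).card →
      2 ^ (m + 3) * (F.filter (· ∈ K m)).card ≤ F.card := by
    intro m hm
    set ρ := 2 ^ (m + 3) with hρ
    have hpd : ((F.filter (· ∈ K m) : Finset L) : Set L).PairwiseDisjoint
        (fun p => F.filter (D ρ p)) := by
      intro p hp q hq hpq
      have hp' := Finset.mem_filter.1 (Finset.mem_coe.1 hp)
      have hq' := Finset.mem_filter.1 (Finset.mem_coe.1 hq)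
      change Disjoint (F.filter (D ρ p)) (F.filter (D ρ q))
      rw [Finset.disjoint_left]
      intro r hr hr'
      rw [Finset.mem_filter] at hr hr'
      exact hpq (hsp m p hp'.2 q hq'.2 (hDtri _ _ _ _ hr.2 hr'.2))
    have hbig : ∀ p ∈ F.filter (· ∈ K m), ρ ≤ (F.filter (D ρ p)).card := by
      intro p hp
      obtain ⟨q, hq, hqp⟩ := Finset.exists_mem_ne (s := F.filter (· ∈ K m)) (by omega) p
      have hp' := Finset.mem_filter.1 hp
      have hq' := Finset.mem_filter.1 hq
      rcases hgrow p hp'.1 ρ with h | h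
      · exfalso
        have h1 : q ∈ F.filter (D ρ p) := by rw [h]; exact hq'.1
        have h2 : q ∈ F.filter (D ρ q) := by
          refine Finset.mem_filter.2 ⟨hq'.1, ?_⟩
          have : ∀ k, D k q q := by
            intro k
            induction k with
            | zero => exact hD0 q
            | succ k ih => exact hDmono _ _ _ ih
          exact this _
        exact Finset.disjoint_left.1 (hpd (Finset.mem_coe.2 hp) (Finset.mem_coe.2 hq) hqp.symm) h1 h2
      · omega
    have e1 := Finset.card_biUnion hpd
    have e2 : ((F.filter (· ∈ K m)).biUnion (fun p => F.filter (D ρ p))).card ≤ F.card := by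
      apply Finset.card_le_card
      intro q hq
      obtain ⟨p, -, hq⟩ := Finset.mem_biUnion.1 hq
      exact (Finset.mem_filter.1 hq).1
    have e3 := Finset.card_nsmul_le_sum _ _ _ hbig
    rw [smul_eq_mul] at e3
    rw [mul_comm]
    omega
  have hKn : 2 ≤ (F.filter (· ∈ K n)).card := by
    by_contra hlt
    have : F.card ≤ (F.biUnion T).card := by
      apply hgood F hall
      intro p hp q hq hpK hqK
      have : (F.filter (· ∈ K n)).card ≤ 1 := by omega
      exact Finset.card_le_one.1 this p (Finset.mem_filter.2 ⟨hp, hpK⟩) q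
        (Finset.mem_filter.2 ⟨hq, hqK⟩)
    omega
  have hnum := c_num n F.card (fun m => (F.filter (· ∈ K m)).card)
    (fun m => by
      by_cases h : 2 ≤ (F.filter (· ∈ K m)).card
      · exact Or.inr (hcount m h)
      · left; omega)
    ((Nat.mul_le_mul_left _ hKn).trans (hcount n hKn))
  set Z := (Finset.range (n + 1)).biUnion (fun m => F.filter (· ∈ K m)) with hZ
  have hZc : Z.card ≤ ∑ m ∈ Finset.range (n + 1), (F.filter (· ∈ K m)).card :=
    Finset.card_biUnion_le
  have hZF : Z ⊆ F := by
    intro q hq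
    obtain ⟨p, -, hq⟩ := Finset.mem_biUnion.1 hq
    exact (Finset.mem_filter.1 hq).1
  have hU : (F \ Z).biUnion t ⊆ F.biUnion T := by
    intro y hy
    obtain ⟨p, hp, hy⟩ := Finset.mem_biUnion.1 hy
    rw [Finset.mem_sdiff] at hp
    refine Finset.mem_biUnion.2 ⟨p, hp.1, ?_⟩
    rw [hfree p]
    · exact hy
    · intro m hm hpm
      exact hp.2 (Finset.mem_biUnion.2 ⟨m, Finset.mem_range.2 (by omega),
        Finset.mem_filter.2 ⟨hp.1, hpm⟩⟩)
  have e1 := Finset.card_le_card hU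
  have e2 := h2 (F \ Z)
  have e3 := Finset.card_sdiff_add_card_eq_card hZF
  omega
end PartC1
section PartC2
variable {X Γ : Type*} [Group Γ] [MulAction Γ X]

open Classical in
def cGood (σ : X → Fin 4 → Finset Γ) (j : Fin 4) (x : X) (s : Γ) : Prop :=
  ∀ F : Finset (Γ × Fin 4), ∃ c : F → Γ,
    (∀ p : F, (p.1.1 • x = x ∧ p.1.2 = j → c p = s) ∧
      (¬ (p.1.1 • x = x ∧ p.1.2 = j) → c p ∈ σ (p.1.1 • x) p.1.2)) ∧
    ∀ p q : F, c p • p.1.1 • x = c q • q.1.1 • x → p.1.1 • x = q.1.1 • x ∧ p.1.2 = q.1.2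

open Classical in
noncomputable def cStep (enc : Γ → ℕ) (A : Set X) (j : Fin 4) (σ : X → Fin 4 → Finset Γ)
    (x : X) (i : Fin 4) : Finset Γ :=
  if i = j ∧ x ∈ A then
    (σ x i).filter (fun s => cGood σ j x s ∧ ∀ s', s' ∈ σ x i → cGood σ j x s' → enc s ≤ enc s')
  else σ x i

noncomputable def cSeq (enc : Γ → ℕ) (S : Finset Γ) (A : ℕ → Set X) (slot : ℕ → Fin 4) :
    ℕ → X → Fin 4 → Finset Γ
  | 0 => fun _ _ => S
  | n + 1 => cStep enc (A n) (slot n) (cSeq enc S A slot n)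

open Classical in
noncomputable def cT (σ : X → Fin 4 → Finset Γ) (p : X × Fin 4) : Finset X :=
  (σ p.1 p.2).image (fun s => s • p.1)

theorem cGood_meas [Countable Γ] [MeasurableSpace X]
    (hmeas : ∀ γ : Γ, Measurable (fun x : X => γ • x))
    (heq : ∀ γ δ : Γ, Measurable (fun x : X => γ • x = δ • x)) (σ : X → Fin 4 → Finset Γ)
    (hσ : ∀ i s, Measurable (fun x => s ∈ σ x i)) (j : Fin 4) (s : Γ) :
    Measurable (fun x => cGood σ j x s) := by
  have heq1 : ∀ γ : Γ, Measurable (fun x : X => γ • x = x) := by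
    intro γ; simpa using heq γ 1
  have heq2 : ∀ a b c d : Γ, Measurable (fun x : X => a • b • x = c • d • x) := by
    intro a b c d; simpa [mul_smul] using heq (a * b) (c * d)
  unfold cGood
  refine Measurable.forall fun F => Measurable.exists fun c => Measurable.and ?_ ?_
  · refine Measurable.forall fun p => Measurable.and ?_ ?_
    · exact ((heq1 _).and measurable_const).imp measurable_const
    · exact ((heq1 _).and measurable_const).not.imp ((hσ _ _).comp (hmeas p.1.1))
  · refine Measurable.forall fun p => Measurable.forall fun q => ?_
    exact (heq2 _ _ _ _).imp ((heq _ _).and measurable_const)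

theorem cSeq_meas [Countable Γ] [MeasurableSpace X]
    (hmeas : ∀ γ : Γ, Measurable (fun x : X => γ • x))
    (heq : ∀ γ δ : Γ, Measurable (fun x : X => γ • x = δ • x)) (enc : Γ → ℕ) (S : Finset Γ)
    (A : ℕ → Set X) (slot : ℕ → Fin 4) (hA : ∀ n, MeasurableSet (A n)) (n : ℕ) :
    ∀ i s, Measurable (fun x => s ∈ cSeq enc S A slot n x i) := by
  classical
  induction n with
  | zero =>
    intro i s
    change Measurable (fun x : X => s ∈ S)
    exact measurable_const
  | succ n ih =>
    intro i s
    have hg := cGood_meas hmeas heq _ ih (slot n)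
    have : (fun x => s ∈ cSeq enc S A slot (n + 1) x i) = fun x =>
        ((i = slot n ∧ x ∈ A n → (cGood (cSeq enc S A slot n) (slot n) x s ∧
          ∀ s', s' ∈ cSeq enc S A slot n x i → cGood (cSeq enc S A slot n) (slot n) x s' →
            enc s ≤ enc s')) ∧ s ∈ cSeq enc S A slot n x i) := by
      funext x
      change (s ∈ cStep enc (A n) (slot n) (cSeq enc S A slot n) x i) = _
      unfold cStep
      split_ifs with h
      · rw [Finset.mem_filter]
        simp only [h, true_and, true_implies, and_comm]
      · simp only [h, false_implies, true_and]
    rw [this]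
    refine Measurable.and (Measurable.imp (measurable_const.and (hA n).mem) ?_) (ih i s)
    refine (hg s).and (Measurable.forall fun s' => ?_)
    exact (ih i s').imp ((hg s').imp measurable_const)

theorem cSeq_succ_sub (enc : Γ → ℕ) (S : Finset Γ) (A : ℕ → Set X) (slot : ℕ → Fin 4) (n : ℕ)
    (x : X) (i : Fin 4) : cSeq enc S A slot (n + 1) x i ⊆ cSeq enc S A slot n x i := by
  classical
  change cStep enc (A n) (slot n) (cSeq enc S A slot n) x i ⊆ _
  unfold cStep
  split_ifs
  · exact Finset.filter_subset _ _
  · exact Finset.Subset.refl _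

theorem cSeq_anti (enc : Γ → ℕ) (S : Finset Γ) (A : ℕ → Set X) (slot : ℕ → Fin 4)
    (x : X) (i : Fin 4) : Antitone (fun n => cSeq enc S A slot n x i) :=
  antitone_nat_of_succ_le fun n => cSeq_succ_sub enc S A slot n x i

theorem cSeq_single {enc : Γ → ℕ} (henc : Function.Injective enc) (S : Finset Γ) (A : ℕ → Set X)
    (slot : ℕ → Fin 4) (n : ℕ) (x : X) (hx : x ∈ A n) (s s' : Γ)
    (h : s ∈ cSeq enc S A slot (n + 1) x (slot n))
    (h' : s' ∈ cSeq enc S A slot (n + 1) x (slot n)) : s = s' := by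
  classical
  change s ∈ cStep enc (A n) (slot n) (cSeq enc S A slot n) x (slot n) at h
  change s' ∈ cStep enc (A n) (slot n) (cSeq enc S A slot n) x (slot n) at h'
  unfold cStep at h h'
  rw [if_pos ⟨rfl, hx⟩, Finset.mem_filter] at h h'
  exact henc (le_antisymm (h.2.2 _ h'.1 h'.2.1) (h'.2.2 _ h.1 h.2.1))

/-- existence of a good choice -/
theorem cGood_exists (σ : X → Fin 4 → Finset Γ) (f : X × Fin 4 → X) (hf : Function.Injective f)
    (hfT : ∀ p, f p ∈ cT σ p) (j : Fin 4) (x : X) : ∃ s ∈ σ x j, cGood σ j x s := by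
  classical
  have h1 : ∀ p : X × Fin 4, ∃ s ∈ σ p.1 p.2, s • p.1 = f p := by
    intro p
    have := hfT p
    unfold cT at this
    simpa using this
  choose g hg1 hg2 using h1
  refine ⟨g (x, j), hg1 (x, j), fun F => ⟨fun p => g (p.1.1 • x, p.1.2), fun p => ⟨?_, ?_⟩, ?_⟩⟩
  · rintro ⟨h, h'⟩
    dsimp only
    rw [h, h']
  · intro _
    exact hg1 (p.1.1 • x, p.1.2)
  · intro p q h
    have := hf (((hg2 (p.1.1 • x, p.1.2)).symm.trans h).trans (hg2 (q.1.1 • x, q.1.2)))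
    exact Prod.ext_iff.1 this

theorem cStep_good (enc : Γ → ℕ) (A : Set X) (j : Fin 4) (σ : X → Fin 4 → Finset Γ)
    (f : X × Fin 4 → X) (hf : Function.Injective f)
    (hfT : ∀ p, f p ∈ cT σ p) (x : X) (hx : x ∈ A) :
    ∃ s ∈ cStep enc A j σ x j, cGood σ j x s := by
  classical
  obtain ⟨s, hs, hg⟩ := cGood_exists σ f hf hfT j x
  obtain ⟨s₀, h0, hmin⟩ := Finset.exists_min_image ((σ x j).filter (cGood σ j x)) enc
    ⟨s, Finset.mem_filter.2 ⟨hs, hg⟩⟩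
  rw [Finset.mem_filter] at h0
  refine ⟨s₀, ?_, h0.2⟩
  unfold cStep
  rw [if_pos ⟨rfl, hx⟩, Finset.mem_filter]
  exact ⟨h0.1, h0.2, fun s' h h' => hmin s' (Finset.mem_filter.2 ⟨h, h'⟩)⟩

open Classical in
theorem cStep_hall (enc : Γ → ℕ) (A : Set X) (j : Fin 4) (σ : X → Fin 4 → Finset Γ)
    (hσ : ∀ F : Finset (X × Fin 4), F.card ≤ (F.biUnion (cT σ)).card)
    (F : Finset (X × Fin 4)) (horb : ∀ p ∈ F, ∀ q ∈ F, ∃ γ : Γ, q.1 = γ • p.1)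
    (hone : ∀ p ∈ F, ∀ q ∈ F, (p.2 = j ∧ p.1 ∈ A) → (q.2 = j ∧ q.1 ∈ A) → p = q) :
    F.card ≤ (F.biUnion (cT (cStep enc A j σ))).card := by
  have hsame : ∀ p : X × Fin 4, ¬ (p.2 = j ∧ p.1 ∈ A) → cT (cStep enc A j σ) p = cT σ p := by
    intro p hp
    unfold cT cStep
    rw [if_neg hp]
  by_cases hex : ∃ p ∈ F, p.2 = j ∧ p.1 ∈ A
  · obtain ⟨⟨x, i⟩, hpF, hi, hxA⟩ := hex
    dsimp only at hi hxA
    subst hi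
    obtain ⟨f, hf, hfT⟩ := (Finset.all_card_le_biUnion_card_iff_exists_injective (cT σ)).1 hσ
    obtain ⟨s, hs, hg⟩ := cStep_good enc A i σ f hf hfT x hxA
    have h1 : ∀ q : X × Fin 4, ∃ γ : Γ, q ∈ F → q.1 = γ • x := by
      intro q
      by_cases hq : q ∈ F
      · obtain ⟨γ, h⟩ := horb _ hpF q hq
        exact ⟨γ, fun _ => h⟩
      · exact ⟨1, fun h => absurd h hq⟩
    choose g hgF using h1
    obtain ⟨c, hc1, hc2⟩ := hg (F.image (fun q => (g q, q.2)))
    let k : F → X := fun q => c ⟨(g q, q.1.2), Finset.mem_image_of_mem (fun q => (g q, q.2)) q.2⟩ • q.1.1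
    have hk : Function.Injective k := by
      intro q r hqr
      have := hc2 ⟨(g q, q.1.2), Finset.mem_image_of_mem (fun q => (g q, q.2)) q.2⟩
        ⟨(g r, r.1.2), Finset.mem_image_of_mem (fun q => (g q, q.2)) r.2⟩
      dsimp only at this
      rw [← hgF q q.2, ← hgF r r.2] at this
      obtain ⟨e1, e2⟩ := this hqr
      exact Subtype.ext (Prod.ext e1 e2)
    have hkT : ∀ q, k q ∈ F.biUnion (cT (cStep enc A i σ)) := by
      intro q
      refine Finset.mem_biUnion.2 ⟨q.1, q.2, ?_⟩
      have h3 := hc1 ⟨(g q, q.1.2), Finset.mem_image_of_mem (fun q => (g q, q.2)) q.2⟩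
      dsimp only at h3
      rw [← hgF q q.2] at h3
      by_cases hq : q.1.1 = x ∧ q.1.2 = i
      · have h4 := h3.1 hq
        refine Finset.mem_image.2 ⟨s, ?_, ?_⟩
        · rw [hq.1, hq.2]; exact hs
        · change _ = c _ • _
          rw [h4]
      · have h4 := h3.2 hq
        rw [hsame]
        · exact Finset.mem_image.2 ⟨_, h4, rfl⟩
        · intro h5
          apply hq
          have := hone _ hpF q.1 q.2 ⟨rfl, hxA⟩ h5
          rw [← this]
          exact ⟨rfl, rfl⟩
    have := Finset.card_le_card_of_injOn (s := F.attach) k (fun q _ => hkT q) hk.injOn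
    rwa [Finset.card_attach] at this
  · push Not at hex
    have : F.biUnion (cT (cStep enc A j σ)) = F.biUnion (cT σ) :=
      Finset.biUnion_congr rfl fun p hp => hsame p (fun h => hex p hp h.1 h.2)
    rw [this]
    exact hσ F

open Classical in
noncomputable def cW (S : Finset Γ) : Finset Γ := insert 1 (S⁻¹ * S)

theorem cW_one (S : Finset Γ) : (1 : Γ) ∈ cW S := by unfold cW; simp

open Classical in
theorem cW_inv (S : Finset Γ) (k : ℕ) : ∀ w ∈ cW S ^ k, w⁻¹ ∈ cW S ^ k := by
  have h : (cW S)⁻¹ = cW S := by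
    unfold cW
    ext w
    simp [Finset.mem_inv', mul_inv_rev, Finset.mem_mul]
  intro w hw
  rw [← h, ← Finset.mem_inv', ← inv_pow, inv_inv]
  exact hw


open Classical in
theorem cSeq_hall (enc : Γ → ℕ) (S : Finset Γ)
    (hS : ∀ F : Finset X, 8 * F.card ≤ (F.biUnion fun x => S.image (fun s => s • x)).card)
    (A : ℕ → Set X) (slot : ℕ → Fin 4)
    (hsp : ∀ n, ∀ x ∈ A n, ∀ w ∈ cW S ^ (2 * 2 ^ (n + 3)), w • x ∈ A n → w • x = x) (n : ℕ) :
    ∀ F : Finset (X × Fin 4), F.card ≤ (F.biUnion (cT (cSeq enc S A slot n))).card := by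
  have h2 : ∀ F : Finset (X × Fin 4), 2 * F.card ≤ (F.biUnion (cT (cSeq enc S A slot 0))).card := by
    intro F
    have h1 : F ⊆ (F.image Prod.fst) ×ˢ (Finset.univ : Finset (Fin 4)) := by
      intro p hp
      exact Finset.mem_product.2 ⟨Finset.mem_image_of_mem _ hp, Finset.mem_univ _⟩
    have h3 := Finset.card_le_card h1
    rw [Finset.card_product, Finset.card_univ, Fintype.card_fin] at h3
    have h4 := hS (F.image Prod.fst)
    have h5 : ((F.image Prod.fst).biUnion fun x => S.image (fun s => s • x)) =
        F.biUnion (cT (cSeq enc S A slot 0)) := by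
      rw [Finset.image_biUnion]
      rfl
    rw [h5] at h4
    omega
  induction n with
  | zero => intro F; have := h2 F; omega
  | succ n ih =>
    refine c_hall (cT (cSeq enc S A slot 0)) (cT (cSeq enc S A slot (n + 1))) h2 ?_
      (fun m => {p | p.2 = slot m ∧ p.1 ∈ A m}) n ?_
      (fun k p q => ∃ w ∈ cW S ^ k, q.1 = w • p.1) ?_ ?_ ?_ ?_ ?_ ?_
    · intro p
      exact Finset.image_subset_image (cSeq_anti enc S A slot p.1 p.2 (Nat.zero_le _))
    · intro p hp
      have : ∀ k ≤ n + 1, cSeq enc S A slot k p.1 p.2 = cSeq enc S A slot 0 p.1 p.2 := by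
        intro k
        induction k with
        | zero => intro _; rfl
        | succ k ihk =>
          intro hk
          rw [← ihk (by omega)]
          change cStep enc (A k) (slot k) (cSeq enc S A slot k) p.1 p.2 = _
          unfold cStep
          exact if_neg (hp k (by omega))
      unfold cT
      rw [this (n + 1) le_rfl]
    · intro p
      exact ⟨1, by simp, by simp⟩
    · rintro k p q ⟨w, hw, h⟩
      refine ⟨w, ?_, h⟩
      rw [pow_succ]
      simpa using Finset.mul_mem_mul hw (cW_one S)
    · rintro k p q r ⟨w, hw, h⟩ hd
      rw [Finset.not_disjoint_iff] at hd
      obtain ⟨y, hy, hy'⟩ := hd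
      obtain ⟨s, hs, e1⟩ := Finset.mem_image.1 hy
      obtain ⟨s', hs', e2⟩ := Finset.mem_image.1 hy'
      refine ⟨(s'⁻¹ * s) * w, ?_, ?_⟩
      · rw [pow_succ']
        refine Finset.mul_mem_mul ?_ hw
        unfold cW
        exact Finset.mem_insert_of_mem (Finset.mul_mem_mul (Finset.inv_mem_inv hs') hs)
      · rw [mul_smul, ← h, mul_smul, e1, ← e2, inv_smul_smul]
    · rintro k p q r ⟨w, hw, h⟩ ⟨w', hw', h'⟩
      refine ⟨w'⁻¹ * w, ?_, ?_⟩
      · rw [two_mul, pow_add]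
        exact Finset.mul_mem_mul (cW_inv S k _ hw') hw
      · rw [mul_smul, ← h, h', inv_smul_smul]
    · rintro m ⟨x, i⟩ ⟨hp1, hp2⟩ ⟨y, j⟩ ⟨hq1, hq2⟩ ⟨w, hw, h⟩
      dsimp only at hp1 hp2 hq1 hq2 h
      have := hsp m x hp2 w hw (h ▸ hq2)
      rw [h, this, hp1, hq1]
    · intro F hF hone
      refine cStep_hall enc (A n) (slot n) _ ih F ?_ hone
      intro p hp q hq
      obtain ⟨k, w, -, h⟩ := hF p hp q hq
      exact ⟨w, h⟩

open Classical in
theorem partC [Countable Γ] [MeasurableSpace X]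
    (hmeas : ∀ γ : Γ, Measurable (fun x : X => γ • x))
    (heq : ∀ γ δ : Γ, Measurable (fun x : X => γ • x = δ • x)) (S : Finset Γ)
    (hS : ∀ F : Finset X, 8 * F.card ≤ (F.biUnion fun x => S.image (fun s => s • x)).card)
    (A : ℕ → Set X) (slot : ℕ → Fin 4) (hA : ∀ n, MeasurableSet (A n))
    (hsp : ∀ n, ∀ x ∈ A n, ∀ w ∈ cW S ^ (2 * 2 ^ (n + 3)), w • x ∈ A n → w • x = x) :
    ∃ Φ : X → Fin 4 → X, (∀ x y i j, Φ x i = Φ y j → x = y ∧ i = j) ∧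
      (∀ x i, ∃ γ ∈ S, Φ x i = γ • x) ∧
      ∀ B : Set X, MeasurableSet B → (∀ x ∈ B, ∀ i, ∃ n, slot n = i ∧ x ∈ A n) →
        ∀ i (γ : Γ), MeasurableSet (B ∩ {x | Φ x i = γ • x}) := by
  obtain ⟨enc, henc⟩ := exists_injective_nat Γ
  let σ := cSeq enc S A slot
  let τ : X → Fin 4 → Finset Γ := fun x i => S.filter (fun s => ∀ n, s ∈ σ n x i)
  have hHall : ∀ F : Finset (X × Fin 4), F.card ≤ (F.biUnion (cT τ)).card := by
    intro F
    have hev : ∀ᶠ n in Filter.atTop, ∀ p ∈ F, ∀ s ∈ S, s ∈ σ n p.1 p.2 → ∀ m, s ∈ σ m p.1 p.2 := by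
      rw [Filter.eventually_all_finset]
      intro p _
      rw [Filter.eventually_all_finset]
      intro s _
      by_cases h : ∀ m, s ∈ σ m p.1 p.2
      · exact Filter.Eventually.of_forall fun _ _ => h
      · push Not at h
        obtain ⟨m, hm⟩ := h
        filter_upwards [Filter.eventually_ge_atTop m] with n hn hs
        exact absurd (cSeq_anti enc S A slot p.1 p.2 hn hs) hm
    obtain ⟨n, hn⟩ := hev.exists
    refine (cSeq_hall enc S hS A slot hsp n F).trans (Finset.card_le_card ?_)
    refine Finset.biUnion_mono fun p hp => Finset.image_subset_image fun s hs => ?_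
    have hsS : s ∈ S := cSeq_anti enc S A slot p.1 p.2 (Nat.zero_le n) hs
    exact Finset.mem_filter.2 ⟨hsS, hn p hp s hsS hs⟩
  obtain ⟨f, hf, hfT⟩ := (Finset.all_card_le_biUnion_card_iff_exists_injective (cT τ)).1 hHall
  have hfT' : ∀ x i, ∃ s ∈ S, (∀ n, s ∈ σ n x i) ∧ f (x, i) = s • x := by
    intro x i
    obtain ⟨s, hs, h⟩ := Finset.mem_image.1 (hfT (x, i))
    obtain ⟨h1, h2⟩ := Finset.mem_filter.1 hs
    exact ⟨s, h1, h2, h.symm⟩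
  refine ⟨fun x i => f (x, i), fun x y i j h => Prod.ext_iff.1 (hf h), ?_, ?_⟩
  · intro x i
    obtain ⟨s, h1, -, h2⟩ := hfT' x i
    exact ⟨s, h1, h2⟩
  · intro B hB hBA i γ
    have : B ∩ {x | f (x, i) = γ • x} = B ∩ {x | ∃ s : Γ, (∀ n, s ∈ σ n x i) ∧ s • x = γ • x} := by
      ext x
      constructor
      · rintro ⟨hx, h⟩
        have h : f (x, i) = γ • x := h
        obtain ⟨s, -, h1, h2⟩ := hfT' x i
        exact ⟨hx, s, h1, by rw [← h2, h]⟩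
      · rintro ⟨hx, s, h1, h2⟩
        obtain ⟨s', -, h1', h2'⟩ := hfT' x i
        obtain ⟨n, rfl, hn⟩ := hBA x hx i
        have := cSeq_single henc S A slot n x hn s s' (h1 _) (h1' _)
        refine ⟨hx, ?_⟩
        change f (x, slot n) = γ • x
        rw [h2', ← this, h2]
    rw [this]
    refine hB.inter (measurableSet_setOfPred.2 ?_)
    exact Measurable.exists fun s => (Measurable.forall fun n =>
      cSeq_meas hmeas heq enc S A slot hA n i s).and (heq s γ)
end PartC2
section PartD
open scoped MeasureTheory

@[reducible] def dSp {X : Type*} [MeasurableSpace X] (B : Set X) : MeasurableSpace X :=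
  MeasurableSpace.map (Subtype.val : B → X) inferInstance

open Classical in
theorem vnd_countable {Γ X : Type*} [Group Γ] [Countable Γ] [TopologicalSpace X] [PolishSpace X]
    [mX : MeasurableSpace X] [BorelSpace X] [MulAction Γ X]
    (hmeas : ∀ γ : Γ, Measurable (fun x : X => γ • x)) (S : Finset Γ)
    (hS : ∀ F : Finset X, 8 * F.card ≤ (F.biUnion fun x => S.image (fun s => s • x)).card) :
    ∃ (B : Set X) (b : FreeGroup (Fin 2) →* Equiv.Perm X),
      MeasurableSet B ∧ B ∈ residual X ∧
      (∀ w : FreeGroup (Fin 2), BaireMeasurableFun (⇑(b w))) ∧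
      (∀ w : FreeGroup (Fin 2), w ≠ 1 → ∀ x : X, b w x ≠ x) ∧
      (∀ w : FreeGroup (Fin 2), ∃ S : Finset Γ, ∀ x : X, ∃ γ ∈ S, b w x = γ • x) ∧
      (∀ w : FreeGroup (Fin 2), ∀ x : X, x ∈ B ↔ b w x ∈ B) ∧
      (∀ w : FreeGroup (Fin 2), Measurable (B.restrict (⇑(b w)))) := by
  have heq : ∀ γ δ : Γ, Measurable (fun x : X => γ • x = δ • x) := fun γ δ =>
    measurableSet_setOfPred.1 (measurableSet_eq_fun (hmeas γ) (hmeas δ))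
  obtain ⟨A, slot, hA, hsp, hres⟩ := partB hmeas (fun n => cW S ^ (2 * 2 ^ (n + 3)))
  obtain ⟨Φ, hΦ, hΦS, hΦB⟩ := partC hmeas heq S hS A slot hA hsp
  set B : Set X := ⋂ (γ : Γ) (i : Fin 4), {x | ∃ n, slot n = i ∧ γ • x ∈ A n} with hBdef
  have hBmem : ∀ x, x ∈ B ↔ ∀ (γ : Γ) (i : Fin 4), ∃ n, slot n = i ∧ γ • x ∈ A n := by
    intro x
    rw [hBdef, Set.mem_iInter]
    exact forall_congr' fun γ => Set.mem_iInter
  have hBm : MeasurableSet B := by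
    refine MeasurableSet.iInter fun γ => MeasurableSet.iInter fun i => measurableSet_setOfPred.2 ?_
    exact Measurable.exists fun n => measurable_const.and ((hA n).mem.comp (hmeas γ))
  have hBsub : ∀ x ∈ B, ∀ γ : Γ, γ • x ∈ B := by
    intro x hx γ
    rw [hBmem] at hx ⊢
    intro δ i
    obtain ⟨n, h1, h2⟩ := hx (δ * γ) i
    exact ⟨n, h1, by rwa [mul_smul] at h2⟩
  have hBinv : ∀ x (γ : Γ), γ • x ∈ B ↔ x ∈ B := by
    intro x γ
    exact ⟨fun h => by simpa using hBsub _ h γ⁻¹, fun h => hBsub x h γ⟩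
  have hΦB' := hΦB B hBm (fun x hx i => by
    obtain ⟨n, h1, h2⟩ := (hBmem x).1 hx 1 i
    exact ⟨n, h1, by simpa using h2⟩)
  -- the auxiliary measurable structure
  have hm' : ∀ s : Set X, MeasurableSet[dSp B] s ↔ MeasurableSet (B ∩ s) := by
    intro s
    change MeasurableSet ((Subtype.val : B → X) ⁻¹' s) ↔ _
    rw [← (MeasurableEmbedding.subtype_coe hBm).measurableSet_image, Subtype.image_preimage_coe]
  have hle : mX ≤ dSp B := fun s hs => (hm' s).2 (hBm.inter hs)
  have hmeas' : ∀ γ : Γ, Measurable[dSp B, dSp B] (fun x : X => γ • x) := by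
    intro γ s hs
    rw [hm'] at hs ⊢
    have : B ∩ (fun x : X => γ • x) ⁻¹' s = (fun x : X => γ • x) ⁻¹' (B ∩ s) := by
      ext x
      exact and_congr_left fun _ => (hBinv x γ).symm
    rw [this]
    exact hmeas γ hs
  have hΦm : ∀ i, Measurable[dSp B, dSp B] (fun x => Φ x i) := by
    intro i
    refine @v_pieces X X Γ (dSp B) (dSp B) _ (fun γ x => γ • x) hmeas' (fun γ => {x | Φ x i = γ • x}) ?_ _
      (fun γ x h => h) ?_
    · intro γ
      exact (hm' _).2 (hΦB' i γ)
    · intro x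
      obtain ⟨γ, -, h⟩ := hΦS x i
      exact ⟨γ, h⟩
  have he := MeasureTheory.measurableEmbedding_embeddingReal X
  have he' : Measurable[dSp B] (MeasureTheory.embeddingReal X) := he.measurable.mono hle le_rfl
  obtain ⟨b, hb1, hb2, hb3⟩ := @partA X Γ _ _ _ (dSp B) hmeas' _ he' he.injective S Φ hΦ hΦS hΦm
  have hinv : ∀ w x, x ∈ B ↔ b w x ∈ B := by
    intro w x
    obtain ⟨T, hT⟩ := hb3 w
    obtain ⟨γ, -, h⟩ := hT x
    rw [h, hBinv]
  refine ⟨B, b, hBm, hres, ?_, hb2, hb3, hinv, ?_⟩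
  · intro w s hs
    have h1 : MeasurableSet (B ∩ (b w) ⁻¹' s) := (hm' _).1 (hb1 w (hle s hs))
    refine h1.baireMeasurableSet.congr ?_
    filter_upwards [hres] with x hx
    exact propext ⟨fun h => h.2, fun h => ⟨hx, h⟩⟩
  · intro w s hs
    exact hb1 w (hle s hs)

open Classical in
theorem d_expand {Γ X : Type*} [Group Γ] [MulAction Γ X] {n m : ℕ} {A : Fin n → Set X}
    {B : Fin m → Set X} {α : Fin n → Γ} {β : Fin m → Γ} (h : IsParadoxicalDecomposition A B α β)
    (S : Finset Γ) (hα : ∀ i, (α i)⁻¹ ∈ S) (hβ : ∀ i, (β i)⁻¹ ∈ S) (F : Finset X) :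
    2 * F.card ≤ (S • F).card := by
  obtain ⟨hAA, hBB, hAB, -, -, -, hA, hB⟩ := h
  have h1 : ∀ x : X, ∃ i, (α i)⁻¹ • x ∈ A i := by
    intro x
    have : x ∈ ⋃ i, α i • A i := by rw [hA]; trivial
    obtain ⟨i, hi⟩ := Set.mem_iUnion.1 this
    exact ⟨i, Set.mem_smul_set_iff_inv_smul_mem.1 hi⟩
  have h2 : ∀ x : X, ∃ i, (β i)⁻¹ • x ∈ B i := by
    intro x
    have : x ∈ ⋃ i, β i • B i := by rw [hB]; trivial
    obtain ⟨i, hi⟩ := Set.mem_iUnion.1 this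
    exact ⟨i, Set.mem_smul_set_iff_inv_smul_mem.1 hi⟩
  choose f hf using h1
  choose g hg using h2
  have fi : Function.Injective (fun x => (α (f x))⁻¹ • x) := by
    intro x y hxy
    dsimp only at hxy
    have : f x = f y := by
      by_contra hne
      exact Set.disjoint_left.1 (hAA _ _ hne) (hf x) (hxy ▸ hf y)
    rw [this] at hxy
    exact smul_left_cancel _ hxy
  have gi : Function.Injective (fun x => (β (g x))⁻¹ • x) := by
    intro x y hxy
    dsimp only at hxy
    have : g x = g y := by
      by_contra hne
      exact Set.disjoint_left.1 (hBB _ _ hne) (hg x) (hxy ▸ hg y)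
    rw [this] at hxy
    exact smul_left_cancel _ hxy
  have hd : Disjoint (F.image (fun x => (α (f x))⁻¹ • x)) (F.image (fun x => (β (g x))⁻¹ • x)) := by
    rw [Finset.disjoint_left]
    intro z hz hz'
    obtain ⟨x, -, rfl⟩ := Finset.mem_image.1 hz
    obtain ⟨y, -, hy⟩ := Finset.mem_image.1 hz'
    exact Set.disjoint_left.1 (hAB _ _) (hf x) (hy ▸ hg y)
  have hc := Finset.card_union_of_disjoint hd
  rw [Finset.card_image_of_injective _ fi, Finset.card_image_of_injective _ gi] at hc
  rw [two_mul, ← hc]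
  apply Finset.card_le_card
  intro z hz
  rcases Finset.mem_union.1 hz with hz | hz
  · obtain ⟨x, hx, rfl⟩ := Finset.mem_image.1 hz
    exact Finset.smul_mem_smul (hα _) hx
  · obtain ⟨x, hx, rfl⟩ := Finset.mem_image.1 hz
    exact Finset.smul_mem_smul (hβ _) hx

open Classical in
theorem d_triple {Γ X : Type*} [Group Γ] [MulAction Γ X] (S : Finset Γ)
    (h : ∀ F : Finset X, 2 * F.card ≤ (S • F).card) :
    ∃ T : Finset Γ, ∀ F : Finset X,
      8 * F.card ≤ (F.biUnion fun x => T.image (fun s => s • x)).card := by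
  refine ⟨S * (S * S), fun F => ?_⟩
  have e : (F.biUnion fun x => (S * (S * S)).image (fun s => s • x)) = S • (S • (S • F)) := by
    rw [← mul_smul S S, ← mul_smul, mul_assoc]
    ext y
    simp only [Finset.mem_biUnion, Finset.mem_image, Finset.mem_smul]
    constructor
    · rintro ⟨x, hx, s, hs, h⟩
      exact ⟨s, hs, x, hx, h⟩
    · rintro ⟨s, hs, x, hx, h⟩
      exact ⟨x, hx, s, hs, h⟩
  rw [e]
  have e1 := h F
  have e2 := h (S • F)
  have e3 := h (S • (S • F))
  omega
end PartD

/-- **Theorem (Marks–Unger).** If `a` is a paradoxical action of a group `Γ` on a Polish space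
`X` by Borel automorphisms, then there is a comeager Borel set `B ⊆ X` and a free
`a`-Lipschitz action of `F₂` on `X` by Baire measurable automorphisms such that `B` is
invariant under the `F₂`-action and every element of `F₂` acts by a Borel automorphism on
`B`. -/
theorem dynamical_vnd_strong {Γ X : Type*} [Group Γ] [TopologicalSpace X] [PolishSpace X]
    [MeasurableSpace X] [BorelSpace X] [MulAction Γ X]
    (hBorelAction : ∀ γ : Γ, Measurable (fun x : X => γ • x))
    (hpara : ∃ (n m : ℕ) (A : Fin n → Set X) (B : Fin m → Set X) (α : Fin n → Γ)
      (β : Fin m → Γ), IsParadoxicalDecomposition A B α β) :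
    ∃ (B : Set X) (b : FreeGroup (Fin 2) →* Equiv.Perm X),
      MeasurableSet B ∧ B ∈ residual X ∧
      -- the action is by Baire measurable automorphisms
      (∀ w : FreeGroup (Fin 2), BaireMeasurableFun (⇑(b w))) ∧
      -- the action is free
      (∀ w : FreeGroup (Fin 2), w ≠ 1 → ∀ x : X, b w x ≠ x) ∧
      -- the action is `a`-Lipschitz
      (∀ w : FreeGroup (Fin 2), ∃ S : Finset Γ, ∀ x : X, ∃ γ ∈ S, b w x = γ • x) ∧
      -- `B` is invariant under the `F₂`-action
      (∀ w : FreeGroup (Fin 2), ∀ x : X, x ∈ B ↔ b w x ∈ B) ∧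
      -- every element of `F₂` acts by a Borel automorphism on `B`
      (∀ w : FreeGroup (Fin 2), Measurable (B.restrict (⇑(b w)))) := by
  classical
  obtain ⟨n, m, A, B, α, β, h⟩ := hpara
  let S₀ : Finset Γ := Finset.univ.image (fun i => (α i)⁻¹) ∪ Finset.univ.image (fun i => (β i)⁻¹)
  have hα : ∀ i, (α i)⁻¹ ∈ S₀ := fun i =>
    Finset.mem_union_left _ (Finset.mem_image_of_mem _ (Finset.mem_univ i))
  have hβ : ∀ i, (β i)⁻¹ ∈ S₀ := fun i =>
    Finset.mem_union_right _ (Finset.mem_image_of_mem _ (Finset.mem_univ i))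
  have hexp := d_expand h S₀ hα hβ
  let φ : FreeGroup S₀ →* Γ := FreeGroup.lift (Subtype.val : S₀ → Γ)
  let _ : MulAction (FreeGroup S₀) X := MulAction.compHom X φ
  have hact : ∀ (g : FreeGroup S₀) (x : X), g • x = φ g • x := fun _ _ => rfl
  have _ : Countable (FreeGroup S₀) := 
    FreeGroup.toWord_injective.countable
  let S : Finset (FreeGroup S₀) := Finset.univ.image FreeGroup.of
  have hSF : ∀ F : Finset X, S • F = S₀ • F := by
    intro F
    ext y
    rw [Finset.mem_smul, Finset.mem_smul]
    constructor
    · rintro ⟨g, hg, x, hx, rfl⟩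
      obtain ⟨s, -, rfl⟩ := Finset.mem_image.1 hg
      exact ⟨s.1, s.2, x, hx, by rw [hact]; simp [φ]⟩
    · rintro ⟨s, hs, x, hx, rfl⟩
      exact ⟨FreeGroup.of ⟨s, hs⟩, Finset.mem_image_of_mem _ (Finset.mem_univ _), x, hx, by
        rw [hact]; simp [φ]⟩
  obtain ⟨T, hT⟩ := d_triple S (fun F => by rw [hSF]; exact hexp F)
  obtain ⟨B', b, h1, h2, h3, h4, h5, h6, h7⟩ := vnd_countable (Γ := FreeGroup S₀) (X := X)
    (fun g => hBorelAction (φ g)) T hT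
  refine ⟨B', b, h1, h2, h3, h4, ?_, h6, h7⟩
  intro w
  obtain ⟨T, hT⟩ := h5 w
  refine ⟨T.image φ, fun x => ?_⟩
  obtain ⟨g, hg, hx⟩ := hT x
  exact ⟨φ g, Finset.mem_image_of_mem _ hg, hx⟩
end

section
/- Suppose G is a locally finite bipartite Borel graph on a Polish space X with bipartition {B₀, B₁}, and suppose that for some ε > 0 and some function f : ℕ → ℕ with f(n) ≥ 8 for all n and Σₙ 8/f(n) < ε, the following hold: G satisfies Hall_{ε,1}, and X can be written as a union X = ⋃ₙ Aₙ of Borel sets Aₙ such that distinct points of Aₙ have G-distance greater than f(n). Then G has a Borel perfect matching. -/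
/-- `N_G(F)`: the set of neighbors of points of `F` that are not contained in `F`. -/
def graphNbhd {X : Type*} (G : SimpleGraph X) (F : Set X) : Set X :=
  {y | y ∉ F ∧ ∃ x ∈ F, G.Adj x y}

/-- `M` is a perfect matching of `G`: a symmetric Borel set of (ordered) pairs of adjacent
vertices such that every vertex is matched to exactly one vertex. -/
def IsPerfectMatchingRel {X : Type*} (G : SimpleGraph X) (M : Set (X × X)) : Prop :=
  (∀ p ∈ M, G.Adj p.1 p.2) ∧
  (∀ x y : X, (x, y) ∈ M ↔ (y, x) ∈ M) ∧
  (∀ x : X, ∃! y : X, (x, y) ∈ M)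

namespace BM
open Classical

variable {X : Type*}

noncomputable def NV (nb : X → Finset X) (V : Set X) (F : Finset X) : Finset X :=
  (F.biUnion nb).filter (fun y => y ∈ V)

def Conn (nb : X → Finset X) (F : Finset X) : Prop :=
  ∀ S ⊆ F, S.Nonempty → S ≠ F → ∃ s ∈ S, ∃ t ∈ F, t ∉ S ∧ ∃ z, z ∈ nb s ∧ z ∈ nb t

def Near (G : SimpleGraph X) (a b : X) (k : ℕ) : Prop := ∃ p : G.Walk a b, p.length ≤ k

theorem mem_NV {nb : X → Finset X} {V : Set X} {F : Finset X} {y : X} :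
    y ∈ NV nb V F ↔ (∃ x ∈ F, y ∈ nb x) ∧ y ∈ V := by
  simp [NV]

theorem Near.symm {G : SimpleGraph X} {a b : X} {k : ℕ} (h : Near G a b k) : Near G b a k := by
  obtain ⟨p, hp⟩ := h
  exact ⟨p.reverse, by simpa using hp⟩

theorem Near.trans {G : SimpleGraph X} {a b c : X} {k l : ℕ} (h : Near G a b k)
    (h' : Near G b c l) : Near G a c (k + l) := by
  obtain ⟨p, hp⟩ := h
  obtain ⟨q, hq⟩ := h'
  exact ⟨p.append q, by rw [SimpleGraph.Walk.length_append]; omega⟩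

theorem Near.mono {G : SimpleGraph X} {a b : X} {k l : ℕ} (h : Near G a b k)
    (hkl : k ≤ l) : Near G a b l := by
  obtain ⟨p, hp⟩ := h
  exact ⟨p, hp.trans hkl⟩

theorem near_adj {G : SimpleGraph X} {a b : X} (h : G.Adj a b) : Near G a b 1 :=
  ⟨h.toWalk, by simp⟩

theorem near_refl {G : SimpleGraph X} (a : X) : Near G a a 0 :=
  ⟨SimpleGraph.Walk.nil, by simp⟩

theorem hall_of_conn (nb : X → Finset X) (V : Set X)
    (h : ∀ F : Finset X, (F : Set X) ⊆ V → Conn nb F → F.card ≤ (NV nb V F).card) :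
    ∀ F : Finset X, (F : Set X) ⊆ V → F.card ≤ (NV nb V F).card := by
  intro F
  induction F using Finset.strongInduction with
  | H F ih =>
    intro hF
    by_cases hc : Conn nb F
    · exact h F hF hc
    · unfold Conn at hc
      push Not at hc
      obtain ⟨S, hS, hne, hSF, hsep⟩ := hc
      have h1 := ih S (Finset.ssubset_iff_subset_ne.2 ⟨hS, hSF⟩) (fun a ha => hF (hS ha))
      have h2 := ih (F \ S) (Finset.sdiff_ssubset hS hne)
        (fun a ha => hF (Finset.sdiff_subset ha))
      have hd : Disjoint (NV nb V S) (NV nb V (F \ S)) := by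
        rw [Finset.disjoint_left]
        intro a ha hb
        rw [mem_NV] at ha hb
        obtain ⟨⟨s, hs, has⟩, -⟩ := ha
        obtain ⟨⟨t, ht, hat⟩, -⟩ := hb
        rw [Finset.mem_sdiff] at ht
        exact hsep s hs t ht.1 ht.2 a has hat
      have hu : NV nb V S ∪ NV nb V (F \ S) ⊆ NV nb V F := by
        intro a
        simp only [Finset.mem_union, mem_NV, Finset.mem_sdiff]
        rintro (⟨⟨s, hs, has⟩, hv⟩ | ⟨⟨s, hs, has⟩, hv⟩)
        · exact ⟨⟨s, hS hs, has⟩, hv⟩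
        · exact ⟨⟨s, hs.1, has⟩, hv⟩
      have h3 := Finset.card_le_card hu
      rw [Finset.card_union_of_disjoint hd] at h3
      have h4 := Finset.card_sdiff_add_card_eq_card hS
      omega

theorem one_sided {G : SimpleGraph X} {nb : X → Finset X} (hnb : ∀ x y, y ∈ nb x ↔ G.Adj x y)
    {B₀ B₁ : Set X} (hcover : B₀ ∪ B₁ = Set.univ) (hdisj : Disjoint B₀ B₁)
    (hbip : ∀ x y : X, G.Adj x y → (x ∈ B₀ ∧ y ∈ B₁) ∨ (x ∈ B₁ ∧ y ∈ B₀))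
    {F : Finset X} (hF : Conn nb F) : (F : Set X) ⊆ B₀ ∨ (F : Set X) ⊆ B₁ := by
  have hc : ∀ x, x ∈ B₀ ∨ x ∈ B₁ := fun x => by
    have : x ∈ B₀ ∪ B₁ := by rw [hcover]; trivial
    exact this
  have hd : ∀ x, x ∈ B₀ → x ∈ B₁ → False := fun x h h' => Set.disjoint_left.1 hdisj h h'
  by_cases h0 : (F.filter (fun x => x ∈ B₀)).Nonempty
  · by_cases h1 : F.filter (fun x => x ∈ B₀) = F
    · left
      intro x hx
      rw [← h1] at hx
      simpa using (Finset.mem_filter.1 (Finset.mem_coe.1 hx)).2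
    · obtain ⟨s, hs, t, ht, hts, z, hz, hz'⟩ := hF _ (Finset.filter_subset _ _) h0 h1
      rw [hnb] at hz hz'
      simp only [Finset.mem_filter, not_and] at hs hts
      have := hts ht
      have := hbip _ _ hz
      have := hbip _ _ hz'
      have := hd s
      have := hd z
      tauto
  · right
    intro x hx
    rcases hc x with h | h
    · exact absurd ⟨x, Finset.mem_filter.2 ⟨hx, h⟩⟩ h0
    · exact h

theorem ball {G : SimpleGraph X} {nb : X → Finset X} (hnb : ∀ x y, y ∈ nb x ↔ G.Adj x y)
    {F : Finset X} (hF : Conn nb F) {z : X} (hz : z ∈ F) (r : ℕ) :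
    ∃ B ⊆ F, z ∈ B ∧ (B = F ∨ r + 1 ≤ B.card) ∧ ∀ b ∈ B, Near G z b (2 * r) := by
  induction r with
  | zero =>
    refine ⟨{z}, by simpa using hz, by simp, Or.inr (by simp), ?_⟩
    intro b hb
    rw [Finset.mem_singleton] at hb
    subst hb
    exact near_refl _
  | succ r ih =>
    obtain ⟨B, hB, hzB, hc, hn⟩ := ih
    by_cases hBF : B = F
    · exact ⟨B, hB, hzB, Or.inl hBF, fun b hb => (hn b hb).mono (by omega)⟩
    · obtain ⟨s, hs, t, ht, hts, w, hw, hw'⟩ := hF B hB ⟨z, hzB⟩ hBF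
      rw [hnb] at hw hw'
      refine ⟨insert t B, ?_, by simp [hzB], Or.inr ?_, ?_⟩
      · exact Finset.insert_subset ht hB
      · rw [Finset.card_insert_of_notMem hts]
        have := hc.resolve_left hBF
        omega
      · intro b hb
        rcases Finset.mem_insert.1 hb with rfl | hb
        · exact (((hn s hs).trans (near_adj hw)).trans (near_adj hw').symm).mono (by omega)
        · exact (hn b hb).mono (by omega)

theorem count {G : SimpleGraph X} {nb : X → Finset X} (hnb : ∀ x y, y ∈ nb x ↔ G.Adj x y)
    {F : Finset X} (hF : Conn nb F) {A : Set X} {f : ℕ} (hf : 8 ≤ f)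
    (hA : ∀ x ∈ A, ∀ y ∈ A, x ≠ y → ∀ p : G.Walk x y, f < p.length)
    (C : Finset X) (hC : ∀ c ∈ C, c ∈ A ∧ ∃ z ∈ F, Near G c z 2) :
    C.card ≤ 1 ∨ C.card * f ≤ 8 * F.card := by
  by_cases h1 : C.card ≤ 1
  · exact Or.inl h1
  right
  have hex : ∀ c : X, ∃ B : Finset X, c ∈ C → B ⊆ F ∧ (B = F ∨ f / 4 ≤ B.card) ∧ B.Nonempty ∧
      ∀ b ∈ B, Near G c b (2 * (f / 4)) := by
    intro c
    by_cases hc : c ∈ C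
    · obtain ⟨hcA, z, hz, hn⟩ := hC c hc
      obtain ⟨B, hB, hzB, hcard, hnB⟩ := ball hnb hF hz (f / 4 - 1)
      refine ⟨B, fun _ => ⟨hB, ?_, ⟨z, hzB⟩, ?_⟩⟩
      · rcases hcard with h | h
        · exact Or.inl h
        · right; omega
      · intro b hb
        exact (hn.trans (hnB b hb)).mono (by omega)
    · exact ⟨∅, fun h => absurd h hc⟩
  choose B hB using hex
  have hdis : ∀ c ∈ C, ∀ c' ∈ C, c ≠ c' → Disjoint (B c) (B c') := by
    intro c hc c' hc' hne
    rw [Finset.disjoint_left]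
    intro b hb hb'
    obtain ⟨p, hp⟩ := ((hB c hc).2.2.2 b hb).trans ((hB c' hc').2.2.2 b hb').symm
    have := hA c (hC c hc).1 c' (hC c' hc').1 hne p
    omega
  have hbig : ∀ c ∈ C, f / 4 ≤ (B c).card := by
    intro c hc
    rcases (hB c hc).2.1 with h | h
    · exfalso
      obtain ⟨c', hc', hne⟩ := Finset.exists_mem_ne (s := C) (by omega) c
      obtain ⟨b, hb⟩ := (hB c' hc').2.2.1
      exact Finset.disjoint_left.1 (hdis c' hc' c hc hne) hb (h ▸ (hB c' hc').1 hb)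
    · exact h
  have hsum : C.card * (f / 4) ≤ F.card := by
    calc C.card * (f / 4) ≤ ∑ c ∈ C, (B c).card := by
          simpa using Finset.card_nsmul_le_sum C _ _ hbig
      _ = (C.biUnion B).card := (Finset.card_biUnion hdis).symm
      _ ≤ F.card := Finset.card_le_card (Finset.biUnion_subset.2 fun c hc => (hB c hc).1)
  have : f ≤ 8 * (f / 4) := by omega
  calc C.card * f ≤ C.card * (8 * (f / 4)) := Nat.mul_le_mul_left _ this
    _ = 8 * (C.card * (f / 4)) := by ring
    _ ≤ _ := Nat.mul_le_mul_left _ hsum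

theorem exists_pi {G : SimpleGraph X} {nb : X → Finset X} (hnb : ∀ x y, y ∈ nb x ↔ G.Adj x y)
    {B₀ B₁ : Set X} (hcover : B₀ ∪ B₁ = Set.univ) (hdisj : Disjoint B₀ B₁)
    (hbip : ∀ x y : X, G.Adj x y → (x ∈ B₀ ∧ y ∈ B₁) ∨ (x ∈ B₁ ∧ y ∈ B₀))
    {V : Set X} (hV : ∀ F : Finset X, (F : Set X) ⊆ V → F.card ≤ (NV nb V F).card) :
    ∃ π : X → X, ∀ v ∈ V, π v ∈ V ∧ G.Adj v (π v) ∧ π (π v) = v := by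
  have hc : ∀ x, x ∈ B₀ ∨ x ∈ B₁ := fun x => by
    have : x ∈ B₀ ∪ B₁ := by rw [hcover]; trivial
    exact this
  have hd : ∀ x, x ∈ B₀ → x ∈ B₁ → False := fun x h h' => Set.disjoint_left.1 hdisj h h'
  obtain ⟨φ, hφi, hφ⟩ := (Finset.all_card_le_biUnion_card_iff_exists_injective
    (fun v : V => (nb v).filter (fun y => y ∈ V))).1 (by
      intro s
      have := hV (s.map (Function.Embedding.subtype _)) (by intro a; simp; tauto)
      rw [Finset.card_map] at this
      refine this.trans (Finset.card_le_card ?_)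
      intro a
      rw [mem_NV]
      simp
      tauto)
  simp only [Finset.mem_filter, hnb] at hφ
  have hside0 : ∀ v : V, (v : X) ∈ B₀ → φ v ∈ B₁ := fun v hv => by
    have := hbip _ _ (hφ v).1
    have := hd v
    tauto
  have hside1 : ∀ v : V, (v : X) ∈ B₁ → φ v ∈ B₀ := fun v hv => by
    have := hbip _ _ (hφ v).1
    have := hd v
    tauto
  obtain ⟨h, hbij, hR⟩ := Function.Embedding.schroeder_bernstein_of_rel
    (α := {v : X // v ∈ V ∧ v ∈ B₀}) (β := {v : X // v ∈ V ∧ v ∈ B₁})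
    (f := fun v => ⟨φ ⟨v, v.2.1⟩, (hφ _).2, hside0 _ v.2.2⟩)
    (g := fun v => ⟨φ ⟨v, v.2.1⟩, (hφ _).2, hside1 _ v.2.2⟩)
    (by
      intro a b hab
      simp only [Subtype.mk.injEq] at hab
      have := hφi hab
      simp only [Subtype.mk.injEq] at this
      exact Subtype.ext this)
    (by
      intro a b hab
      simp only [Subtype.mk.injEq] at hab
      have := hφi hab
      simp only [Subtype.mk.injEq] at this
      exact Subtype.ext this)
    (fun a b => G.Adj a b) (fun a => (hφ ⟨a, a.2.1⟩).1) (fun b => (hφ ⟨b, b.2.1⟩).1.symm)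
  let e := Equiv.ofBijective h hbij
  have he : ∀ a : {v : X // v ∈ V ∧ v ∈ B₀}, G.Adj (a : X) (e a : X) := hR
  have he' : ∀ b : {v : X // v ∈ V ∧ v ∈ B₁}, G.Adj (b : X) (e.symm b : X) := fun b => by
    have := he (e.symm b)
    rw [e.apply_symm_apply] at this
    exact this.symm
  clear_value e
  refine ⟨fun v => if h0 : v ∈ V ∧ v ∈ B₀ then e ⟨v, h0⟩ else
    if h1 : v ∈ V ∧ v ∈ B₁ then e.symm ⟨v, h1⟩ else v, ?_⟩
  intro v hv
  rcases hc v with h0 | h1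
  · have h0' : v ∈ V ∧ v ∈ B₀ := ⟨hv, h0⟩
    have h2 : ¬ ((e ⟨v, h0'⟩ : X) ∈ V ∧ (e ⟨v, h0'⟩ : X) ∈ B₀) :=
      fun h => hd _ h.2 (e ⟨v, h0'⟩).2.2
    simp only [dif_pos h0', dif_neg h2, dif_pos (e ⟨v, h0'⟩).2, Subtype.coe_eta,
      Equiv.symm_apply_apply]
    exact ⟨(e ⟨v, h0'⟩).2.1, he ⟨v, h0'⟩, trivial⟩
  · have h1' : v ∈ V ∧ v ∈ B₁ := ⟨hv, h1⟩
    have h2 : ¬ (v ∈ V ∧ v ∈ B₀) := fun h => hd _ h.2 h1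
    simp only [dif_pos h1', dif_neg h2, dif_pos (e.symm ⟨v, h1'⟩).2, Subtype.coe_eta,
      Equiv.apply_symm_apply]
    exact ⟨(e.symm ⟨v, h1'⟩).2.1, he' ⟨v, h1'⟩, trivial⟩


def ev (g : ℕ → X → X) : List ℕ → X → X
  | [], x => x
  | m :: w, x => ev g w (g m x)

def Good (G : SimpleGraph X) (g : ℕ → X → X) (V : Set X) (x y : X) : Prop :=
  y ∈ V ∧ G.Adj x y ∧ ∀ k : ℕ, ∀ W : Fin k → List ℕ,
    (∀ i, ev g (W i) x ∈ V ∧ ev g (W i) x ≠ x ∧ ev g (W i) x ≠ y) →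
    (∀ i j, i ≠ j → ev g (W i) x ≠ ev g (W j) x) →
    ∃ U : Fin k → ℕ, (∀ i, G.Adj (ev g (W i) x) (g (U i) (ev g (W i) x)) ∧
      g (U i) (ev g (W i) x) ∈ V ∧ g (U i) (ev g (W i) x) ≠ x ∧ g (U i) (ev g (W i) x) ≠ y) ∧
      ∀ i j, i ≠ j → g (U i) (ev g (W i) x) ≠ g (U j) (ev g (W j) x)

theorem ev_near {G : SimpleGraph X} {g : ℕ → X → X} (hg : ∀ x y, G.Adj x y → ∃ m, g m x = y)
    {x y : X} (p : G.Walk x y) : ∃ w, ev g w x = y := by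
  induction p with
  | nil => exact ⟨[], rfl⟩
  | cons h p ih =>
    obtain ⟨w, hw⟩ := ih
    obtain ⟨m, hm⟩ := hg _ _ h
    exact ⟨m :: w, by simp only [ev, hm, hw]⟩

theorem measurable_ev [MeasurableSpace X] {g : ℕ → X → X} (hg : ∀ m, Measurable (g m))
    (w : List ℕ) : Measurable (ev g w) := by
  induction w with
  | nil => exact measurable_id
  | cons m w ih => exact ih.comp (hg m)

theorem measurable_good [MeasurableSpace X] [StandardBorelSpace X] {G : SimpleGraph X}
    (hG : MeasurableSet {p : X × X | G.Adj p.1 p.2}) {g : ℕ → X → X}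
    (hg : ∀ m, Measurable (g m)) {V : Set X} (hV : MeasurableSet V) (m : ℕ) :
    MeasurableSet {x | Good G g V x (g m x)} := by
  have hev := measurable_ev hg
  have hne : ∀ a b : X → X, Measurable a → Measurable b → Measurable fun x => a x ≠ b x :=
    fun a b ha hb => (measurableSet_eq_fun ha hb).compl.mem
  have hadj : ∀ a b : X → X, Measurable a → Measurable b → Measurable fun x => G.Adj (a x) (b x) :=
    fun a b ha hb => ((ha.prodMk hb) hG).mem
  have hmem : ∀ a : X → X, Measurable a → Measurable fun x => a x ∈ V :=
    fun a ha => (ha hV).mem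
  have hge : ∀ k w, Measurable fun x => g k (ev g w x) := fun k w => (hg k).comp (hev w)
  apply measurableSet_setOfPred.2
  unfold Good
  refine (hmem _ (hg m)).and ((hadj _ _ measurable_id (hg m)).and ?_)
  refine Measurable.forall fun k => Measurable.forall fun W => Measurable.imp ?_
    (Measurable.imp ?_ ?_)
  · exact Measurable.forall fun i => (hmem _ (hev _)).and
      ((hne _ _ (hev _) measurable_id).and (hne _ _ (hev _) (hg m)))
  · exact Measurable.forall fun i => Measurable.forall fun j => Measurable.forall fun _ =>
      hne _ _ (hev _) (hev _)
  · refine Measurable.exists fun U => Measurable.and ?_ ?_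
    · exact Measurable.forall fun i => (hadj _ _ (hev _) (hge _ _)).and ((hmem _ (hge _ _)).and
        ((hne _ _ (hge _ _) measurable_id).and (hne _ _ (hge _ _) (hg m))))
    · exact Measurable.forall fun i => Measurable.forall fun j => Measurable.forall fun _ =>
        hne _ _ (hge _ _) (hge _ _)

theorem exists_good {G : SimpleGraph X} {nb : X → Finset X} (hnb : ∀ x y, y ∈ nb x ↔ G.Adj x y)
    {B₀ B₁ : Set X} (hcover : B₀ ∪ B₁ = Set.univ) (hdisj : Disjoint B₀ B₁)
    (hbip : ∀ x y : X, G.Adj x y → (x ∈ B₀ ∧ y ∈ B₁) ∨ (x ∈ B₁ ∧ y ∈ B₀))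
    {g : ℕ → X → X} (hgs : ∀ x y, G.Adj x y → ∃ m, g m x = y)
    {V : Set X} (hV : ∀ F : Finset X, (F : Set X) ⊆ V → F.card ≤ (NV nb V F).card)
    {x : X} (hx : x ∈ V) : ∃ m, Good G g V x (g m x) := by
  obtain ⟨π, hπ⟩ := exists_pi hnb hcover hdisj hbip hV
  obtain ⟨m, hm⟩ := hgs _ _ (hπ x hx).2.1
  refine ⟨m, ?_⟩
  rw [hm]
  refine ⟨(hπ x hx).1, (hπ x hx).2.1, ?_⟩
  intro k W hW hinj
  have : ∀ i, ∃ u, g u (ev g (W i) x) = π (ev g (W i) x) := fun i =>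
    hgs _ _ (hπ _ (hW i).1).2.1
  choose U hU using this
  refine ⟨U, fun i => ?_, fun i j hij h => ?_⟩
  · rw [hU]
    refine ⟨(hπ _ (hW i).1).2.1, (hπ _ (hW i).1).1, fun h => ?_, fun h => ?_⟩
    · apply (hW i).2.2
      exact ((hπ _ (hW i).1).2.2.symm.trans (congrArg π h))
    · apply (hW i).2.1
      rw [← (hπ _ (hW i).1).2.2, h, (hπ x hx).2.2]
  · rw [hU, hU] at h
    apply hinj i j hij
    rw [← (hπ _ (hW i).1).2.2, h, (hπ _ (hW j).1).2.2]

theorem good_card {G : SimpleGraph X} {nb : X → Finset X} (hnb : ∀ x y, y ∈ nb x ↔ G.Adj x y)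
    {g : ℕ → X → X} {V : Set X} {x y : X} (h : Good G g V x y) {F : Finset X}
    (hF : (F : Set X) ⊆ V \ {x, y}) (hev : ∀ z ∈ F, ∃ w, ev g w x = z) :
    F.card ≤ (NV nb (V \ {x, y}) F).card := by
  have hev' : ∀ i : Fin F.card, ∃ w, ev g w x = (F.equivFin.symm i : X) :=
    fun i => hev _ (F.equivFin.symm i).2
  choose W hW using hev'
  have hF' : ∀ i : Fin F.card, (F.equivFin.symm i : X) ∈ V ∧ (F.equivFin.symm i : X) ≠ x ∧
      (F.equivFin.symm i : X) ≠ y := fun i => by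
    have := hF (F.equivFin.symm i).2
    simpa [not_or] using this
  obtain ⟨U, hU, hUi⟩ := h.2.2 F.card W (fun i => by rw [hW]; exact hF' i) (fun i j hij h => by
    rw [hW, hW] at h
    exact hij (F.equivFin.symm.injective (Subtype.ext h)))
  have := Finset.card_le_card_of_injOn (s := (Finset.univ : Finset (Fin F.card)))
    (t := NV nb (V \ {x, y}) F) (fun i => g (U i) (ev g (W i) x)) (by
      intro i _
      rw [Finset.mem_coe, mem_NV]
      refine ⟨⟨(F.equivFin.symm i : X), (F.equivFin.symm i).2, ?_⟩, ?_⟩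
      · rw [hnb, ← hW]
        exact (hU i).1
      · have := (hU i).2
        simpa [not_or] using this) (by
      intro i _ j _ hij
      by_contra hne
      exact hUi i j hne hij)
  simpa using this

theorem exists_choice [MeasurableSpace X] [StandardBorelSpace X]
    {G : SimpleGraph X} {nb : X → Finset X} (hnb : ∀ x y, y ∈ nb x ↔ G.Adj x y)
    (hG : MeasurableSet {p : X × X | G.Adj p.1 p.2})
    {B₀ B₁ : Set X} (hcover : B₀ ∪ B₁ = Set.univ) (hdisj : Disjoint B₀ B₁)
    (hbip : ∀ x y : X, G.Adj x y → (x ∈ B₀ ∧ y ∈ B₁) ∨ (x ∈ B₁ ∧ y ∈ B₀))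
    {g : ℕ → X → X} (hgs : ∀ x y, G.Adj x y → ∃ m, g m x = y) (hg : ∀ m, Measurable (g m))
    {V : Set X} (hVm : MeasurableSet V)
    (hV : ∀ F : Finset X, (F : Set X) ⊆ V → F.card ≤ (NV nb V F).card) :
    ∃ y : X → X, Measurable y ∧ ∀ x ∈ V, Good G g V x (y x) := by
  have hp : ∀ x, ∃ m, x ∉ V ∨ Good G g V x (g m x) := by
    intro x
    by_cases hx : x ∈ V
    · obtain ⟨m, hm⟩ := exists_good hnb hcover hdisj hbip hgs hV hx
      exact ⟨m, Or.inr hm⟩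
    · exact ⟨0, Or.inl hx⟩
  have hfind := measurable_find hp (fun k => hVm.compl.union (measurable_good hG hg hVm k))
  have hgg : Measurable fun q : ℕ × X => g q.1 q.2 := measurable_from_prod_countable_right hg
  refine ⟨fun x => g (Nat.find (hp x)) x, hgg.comp (hfind.prodMk measurable_id), ?_⟩
  intro x hx
  exact (Nat.find_spec (hp x)).resolve_left (not_not.2 hx)

theorem exists_g [MeasurableSpace X] [StandardBorelSpace X] {G : SimpleGraph X}
    (hG : MeasurableSet {p : X × X | G.Adj p.1 p.2}) {A : ℕ → Set X}
    (hA : ∀ n, MeasurableSet (A n)) (hAc : (⋃ n, A n) = Set.univ) {f : ℕ → ℕ}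
    (hf : ∀ n, 8 ≤ f n)
    (hs : ∀ n, ∀ x ∈ A n, ∀ y ∈ A n, x ≠ y → ∀ p : G.Walk x y, f n < p.length) :
    ∃ g : ℕ → X → X, (∀ m, Measurable (g m)) ∧ ∀ x y, G.Adj x y → ∃ m, g m x = y := by
  have huniq : ∀ m x y y', y ∈ A m → y' ∈ A m → G.Adj x y → G.Adj x y' → y = y' := by
    intro m x y y' hy hy' h h'
    by_contra hne
    obtain ⟨p, hp⟩ := (near_adj h).symm.trans (near_adj h')
    have := hs m y hy y' hy' hne p
    have := hf m
    omega
  have hmeas : ∀ m (S : Set X), MeasurableSet S →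
      MeasurableSet {x | ∃ y, (y ∈ A m ∧ G.Adj x y) ∧ y ∈ S} := by
    intro m S hS
    have h1 : MeasurableSet ({p : X × X | G.Adj p.1 p.2} ∩ Prod.snd ⁻¹' (A m ∩ S)) :=
      hG.inter (measurable_snd ((hA m).inter hS))
    have h2 := h1.image_of_measurable_injOn measurable_fst (by
      rintro ⟨x, y⟩ ⟨h, h'⟩ ⟨x', y'⟩ ⟨k, k'⟩ (rfl : x = x')
      rw [huniq m x y y' h'.1 k'.1 h k])
    convert h2 using 1
    ext x
    simp only [Set.mem_ofPred_eq, Set.mem_image, Prod.exists, Set.mem_inter_iff, Set.mem_preimage,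
      exists_and_right, exists_eq_right]
    exact exists_congr fun y => by tauto
  refine ⟨fun m x => if h : ∃ y, y ∈ A m ∧ G.Adj x y then h.choose else x, ?_, ?_⟩
  · intro m S hS
    convert (hmeas m S hS).union ((hmeas m Set.univ MeasurableSet.univ).compl.inter hS) using 1
    ext x
    simp only [Set.mem_preimage, Set.mem_union, Set.mem_inter_iff, Set.mem_compl_iff,
      Set.mem_ofPred_eq, Set.mem_univ, and_true]
    by_cases h : ∃ y, y ∈ A m ∧ G.Adj x y
    · rw [dif_pos h]
      simp only [h, not_true_eq_false, false_and, or_false]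
      constructor
      · intro hc
        exact ⟨_, h.choose_spec, hc⟩
      · rintro ⟨y, hy, hyS⟩
        rwa [huniq m x _ y h.choose_spec.1 hy.1 h.choose_spec.2 hy.2]
    · rw [dif_neg h]
      simp only [h, not_false_eq_true, true_and]
      constructor
      · exact Or.inr
      · rintro (⟨y, hy, -⟩ | h')
        · exact absurd ⟨y, hy⟩ h
        · exact h'
  · intro x y hxy
    have : y ∈ ⋃ n, A n := by rw [hAc]; trivial
    obtain ⟨m, hm⟩ := Set.mem_iUnion.1 this
    refine ⟨m, ?_⟩
    have h : ∃ y, y ∈ A m ∧ G.Adj x y := ⟨y, hm, hxy⟩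
    simp only [dif_pos h]
    exact huniq m x _ y h.choose_spec.1 hm h.choose_spec.2 hxy

theorem conn_near {G : SimpleGraph X} {nb : X → Finset X} (hnb : ∀ x y, y ∈ nb x ↔ G.Adj x y)
    {F : Finset X} (hF : Conn nb F) {z z' : X} (hz : z ∈ F) (hz' : z' ∈ F) :
    ∃ k, Near G z z' k := by
  obtain ⟨B, hB, -, hc, hn⟩ := ball hnb hF hz F.card
  refine ⟨_, hn z' ?_⟩
  rcases hc with rfl | hc
  · exact hz'
  · have := Finset.card_le_card hB
    omega

theorem step {G : SimpleGraph X} {nb : X → Finset X} (hnb : ∀ x y, y ∈ nb x ↔ G.Adj x y)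
    {B₀ B₁ : Set X} (hcover : B₀ ∪ B₁ = Set.univ) (hdisj : Disjoint B₀ B₁)
    (hbip : ∀ x y : X, G.Adj x y → (x ∈ B₀ ∧ y ∈ B₁) ∨ (x ∈ B₁ ∧ y ∈ B₀))
    {g : ℕ → X → X} (hgs : ∀ x y, G.Adj x y → ∃ m, g m x = y)
    {A : Set X} {f : ℕ} (hf : 8 ≤ f)
    (hA : ∀ x ∈ A, ∀ y ∈ A, x ≠ y → ∀ p : G.Walk x y, f < p.length)
    {V : Set X} (hV : ∀ F : Finset X, (F : Set X) ⊆ V → F.card ≤ (NV nb V F).card)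
    {y : X → X} (hy : ∀ x ∈ V, Good G g V x (y x))
    {V' : Set X} (hV' : V' = V \ {p | ∃ x ∈ A ∩ V, p = x ∨ p = y x})
    {F : Finset X} (hFV : (F : Set X) ⊆ V') (hF : Conn nb F) :
    ∃ c : ℕ, (NV nb V F).card ≤ (NV nb V' F).card + c ∧ (c ≤ 1 ∨ c * f ≤ 8 * F.card) ∧
      (c ≤ 1 → F.card ≤ (NV nb V' F).card) := by
  have hd : ∀ x, x ∈ B₀ → x ∈ B₁ → False := fun x h h' => Set.disjoint_left.1 hdisj h h'
  have hsub : NV nb V' F ⊆ NV nb V F := by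
    intro a ha
    rw [mem_NV] at ha ⊢
    exact ⟨ha.1, (hV' ▸ ha.2 : a ∈ V \ _).1⟩
  have hR : ∀ p, ∃ x, p ∈ NV nb V F \ NV nb V' F → x ∈ A ∩ V ∧ (p = x ∨ p = y x) := by
    intro p
    by_cases hp : p ∈ NV nb V F \ NV nb V' F
    · rw [Finset.mem_sdiff, mem_NV, mem_NV] at hp
      obtain ⟨⟨h1, h2⟩, h3⟩ := hp
      have h4 : p ∉ V' := fun h => h3 ⟨h1, h⟩
      rw [hV'] at h4
      have h5 : p ∈ {p | ∃ x ∈ A ∩ V, p = x ∨ p = y x} := by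
        by_contra h
        exact h4 ⟨h2, h⟩
      obtain ⟨x, hx, h⟩ := h5
      exact ⟨x, fun _ => ⟨hx, h⟩⟩
    · exact ⟨p, fun h => absurd h hp⟩
  choose q hq using hR
  set R := NV nb V F \ NV nb V' F with hRdef
  have hRF : ∀ p ∈ R, ∃ z ∈ F, G.Adj z p := by
    intro p hp
    rw [hRdef, Finset.mem_sdiff, mem_NV] at hp
    obtain ⟨⟨⟨z, hz, h⟩, -⟩, -⟩ := hp
    exact ⟨z, hz, (hnb _ _).1 h⟩
  have hside : (∀ p ∈ R, p ∈ B₁) ∨ (∀ p ∈ R, p ∈ B₀) := by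
    rcases one_sided hnb hcover hdisj hbip hF with h | h
    · left
      intro p hp
      obtain ⟨z, hz, hzp⟩ := hRF p hp
      have := hbip _ _ hzp
      have := hd z (h hz)
      tauto
    · right
      intro p hp
      obtain ⟨z, hz, hzp⟩ := hRF p hp
      have := hbip _ _ hzp
      have := fun h' => hd z h' (h hz)
      tauto
  have hnoadj : ∀ p ∈ R, ∀ p' ∈ R, ¬ G.Adj p p' := by
    intro p hp p' hp' hadj
    have := hbip _ _ hadj
    have := hd p
    have := hd p'
    rcases hside with h | h
    · have := h p hp
      have := h p' hp'
      tauto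
    · have := h p hp
      have := h p' hp'
      tauto
  have hinj : Set.InjOn q R := by
    intro p hp p' hp' hpp
    have h1 := hq p hp
    have h2 := hq p' hp'
    have hadj := (hy _ h1.1.2).2.1
    rw [← hpp] at h2
    rcases h1.2 with h | h <;> rcases h2.2 with h' | h'
    · rw [h, h']
    · rw [← h', ← h] at hadj
      exact absurd hadj (hnoadj p hp p' hp')
    · rw [← h, ← h'] at hadj
      exact absurd hadj (hnoadj p' hp' p hp)
    · rw [h, h']
  have hnear : ∀ p ∈ R, ∃ z ∈ F, Near G (q p) z 2 := by
    intro p hp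
    obtain ⟨z, hz, hzp⟩ := hRF p hp
    refine ⟨z, hz, ?_⟩
    have h1 := hq p hp
    rcases h1.2 with h | h
    · rw [← h]
      exact (near_adj hzp.symm).mono (by omega)
    · have hadj := (hy _ h1.1.2).2.1
      rw [← h] at hadj
      exact (near_adj hadj).trans (near_adj hzp.symm)
  have hcard : (R.image q).card = R.card := Finset.card_image_of_injOn hinj
  refine ⟨R.card, ?_, ?_, ?_⟩
  · have := Finset.card_sdiff_add_card_eq_card hsub
    rw [← hRdef] at this
    omega
  · rw [← hcard]
    apply count hnb hF hf hA
    intro c hc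
    obtain ⟨p, hp, rfl⟩ := Finset.mem_image.1 hc
    exact ⟨(hq p hp).1.1, hnear p hp⟩
  · intro hc
    have hFV0 : (F : Set X) ⊆ V := fun a ha => (hV' ▸ hFV ha : a ∈ V \ _).1
    rcases Nat.le_one_iff_eq_zero_or_eq_one.1 hc with h0 | h1
    · rw [Finset.card_eq_zero, hRdef, Finset.sdiff_eq_empty_iff_subset] at h0
      exact (hV F hFV0).trans (Finset.card_le_card h0)
    · obtain ⟨p, hp⟩ := Finset.card_eq_one.1 h1
      have hpR : p ∈ R := by rw [hp]; simp
      obtain ⟨hx, hpx⟩ := hq p hpR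
      have hgood := hy _ hx.2
      refine (good_card hnb hgood (F := F) ?_ ?_).trans (Finset.card_le_card ?_)
      · intro a ha
        have := hFV ha
        rw [hV'] at this
        refine ⟨this.1, fun h => this.2 ⟨q p, hx, ?_⟩⟩
        simpa using h
      · intro z hz
        obtain ⟨z', hz', hn⟩ := hnear p hpR
        obtain ⟨k, hk⟩ := conn_near hnb hF hz' hz
        obtain ⟨w, -⟩ := hn.trans hk
        exact ev_near hgs w
      · intro a ha
        rw [mem_NV] at ha
        by_contra hna
        have haR : a ∈ R := by
          rw [hRdef, Finset.mem_sdiff, mem_NV]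
          exact ⟨⟨ha.1, ha.2.1⟩, hna⟩
        rw [hp, Finset.mem_singleton] at haR
        subst haR
        apply ha.2.2
        simpa using hpx

theorem exists_sort (f : ℕ → ℕ) (hf : Filter.Tendsto f Filter.atTop Filter.atTop) :
    ∃ σ : ℕ ≃ ℕ, Monotone (f ∘ σ) := by
  have hex : ∀ s : Finset ℕ, ∃ n, n ∉ s ∧ ∀ m, m ∉ s → f n ≤ f m := by
    intro s
    have hne : ({n | n ∉ s} : Set ℕ).Nonempty := s.exists_notMem
    exact ⟨Function.argminOn f _ hne, Function.argminOn_mem f _ hne,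
      fun m hm => Function.argminOn_le f _ hm⟩
  choose c hc hmin using hex
  let S : ℕ → Finset ℕ := fun n => Nat.rec ∅ (fun _ s => insert (c s) s) n
  have hS : ∀ n, S (n + 1) = insert (c (S n)) (S n) := fun n => rfl
  have hSm : Monotone S := monotone_nat_of_le_succ fun n => by
    rw [hS]; exact Finset.subset_insert _ _
  have hlt : ∀ m n, m < n → c (S m) ∈ S n := fun m n h =>
    hSm (Nat.succ_le_of_lt h) (by rw [hS]; simp)
  have hinj : Function.Injective fun n => c (S n) := by
    intro m n h
    simp only at h
    rcases lt_trichotomy m n with h' | h' | h'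
    · exact absurd (h ▸ hlt m n h') (hc _)
    · exact h'
    · exact absurd (h ▸ hlt n m h') (hc _)
  have hmem : ∀ n m, m ∈ S n → ∃ k, c (S k) = m := by
    intro n
    induction n with
    | zero => intro m hm; exact absurd hm (Finset.notMem_empty _)
    | succ n ih =>
      intro m hm
      rw [hS, Finset.mem_insert] at hm
      rcases hm with h | h
      · exact ⟨n, h.symm⟩
      · exact ih m h
  have hsurj : Function.Surjective fun n => c (S n) := by
    intro m
    by_contra hno
    have hle : ∀ n, f (c (S n)) ≤ f m := fun n => hmin _ _ fun h => hno (hmem n m h)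
    have h1 := hf.comp hinj.nat_tendsto_atTop
    obtain ⟨n, hn⟩ := (h1.eventually (Filter.eventually_gt_atTop (f m))).exists
    exact absurd (hle n) (not_le.2 hn)
  refine ⟨Equiv.ofBijective _ ⟨hinj, hsurj⟩, monotone_nat_of_le_succ fun n => ?_⟩
  exact hmin _ _ fun h => hc (S (n + 1)) (hSm (Nat.le_succ n) h)

theorem core [MeasurableSpace X] [StandardBorelSpace X]
    {G : SimpleGraph X} {nb : X → Finset X} (hnb : ∀ x y, y ∈ nb x ↔ G.Adj x y)
    (hG : MeasurableSet {p : X × X | G.Adj p.1 p.2})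
    {B₀ B₁ : Set X} (hcover : B₀ ∪ B₁ = Set.univ) (hdisj : Disjoint B₀ B₁)
    (hbip : ∀ x y : X, G.Adj x y → (x ∈ B₀ ∧ y ∈ B₁) ∨ (x ∈ B₁ ∧ y ∈ B₀))
    {ε : ℝ} {f : ℕ → ℕ} (hf8 : ∀ n, 8 ≤ f n) (hmono : Monotone f)
    (hsum : ∀ n, ∑ i ∈ Finset.range n, 8 / (f i : ℝ) ≤ ε)
    (hHall : ∀ F : Finset X, Conn nb F → (1 + ε) * (F.card : ℝ) ≤ ((NV nb Set.univ F).card : ℝ))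
    {A : ℕ → Set X} (hA : ∀ n, MeasurableSet (A n)) (hAc : (⋃ n, A n) = Set.univ)
    (hs : ∀ n, ∀ x ∈ A n, ∀ y ∈ A n, x ≠ y → ∀ p : G.Walk x y, f n < p.length) :
    ∃ M : Set (X × X), MeasurableSet M ∧ IsPerfectMatchingRel G M := by
  obtain ⟨g, hg, hgs⟩ := exists_g hG hA hAc hf8 hs
  have hYex : ∀ V : Set X, ∃ y : X → X, MeasurableSet V →
      (∀ F : Finset X, (F : Set X) ⊆ V → F.card ≤ (NV nb V F).card) →
      Measurable y ∧ ∀ x ∈ V, Good G g V x (y x) := by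
    intro V
    by_cases h : MeasurableSet V ∧ (∀ F : Finset X, (F : Set X) ⊆ V → F.card ≤ (NV nb V F).card)
    · obtain ⟨y, hy⟩ := exists_choice hnb hG hcover hdisj hbip hgs hg h.1 h.2
      exact ⟨y, fun _ _ => hy⟩
    · exact ⟨id, fun h1 h2 => absurd ⟨h1, h2⟩ h⟩
  choose Y hY using hYex
  have hnear : ∀ n a b, a ∈ A n → b ∈ A n → Near G a b 2 → a = b := by
    intro n a b ha hb h
    by_contra hne
    obtain ⟨p, hp⟩ := h
    have := hs n a ha b hb hne p
    have := hf8 n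
    omega
  let V : ℕ → Set X := fun n => Nat.rec Set.univ
    (fun n V => V \ {p | ∃ x ∈ A n ∩ V, p = x ∨ p = Y V x}) n
  have hV0 : V 0 = Set.univ := rfl
  have hVs : ∀ n, V (n + 1) = V n \ {p | ∃ x ∈ A n ∩ V n, p = x ∨ p = Y (V n) x} := fun n => rfl
  clear_value V
  have hε : 0 ≤ ε := by simpa using hsum 0
  have inv : ∀ n, MeasurableSet (V n) ∧
      (∀ F : Finset X, (F : Set X) ⊆ V n → F.card ≤ (NV nb (V n) F).card) ∧
      (∀ F : Finset X, (F : Set X) ⊆ V n → Conn nb F → (∀ i < n, f i ≤ 8 * F.card) →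
        (1 + ε - ∑ i ∈ Finset.range n, 8 / (f i : ℝ)) * (F.card : ℝ) ≤
          ((NV nb (V n) F).card : ℝ)) := by
    intro n
    induction n with
    | zero =>
      rw [hV0]
      refine ⟨MeasurableSet.univ, ?_, ?_⟩
      · apply hall_of_conn
        intro F _ hF
        have h1 := hHall F hF
        have h2 : (0 : ℝ) ≤ F.card := by positivity
        have h3 : (F.card : ℝ) ≤ ((NV nb Set.univ F).card : ℝ) := by nlinarith
        exact_mod_cast h3
      · intro F _ hF _
        simpa using hHall F hF
    | succ n ih =>
      obtain ⟨hm, hH, hE⟩ := ih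
      obtain ⟨hYm, hYg⟩ := hY (V n) hm hH
      have hst := fun (F : Finset X) (hFV : (F : Set X) ⊆ V (n + 1)) (hF : Conn nb F) =>
        step hnb hcover hdisj hbip hgs (hf8 n) (hs n) hH hYg (hVs n) hFV hF
      have hsubV : V (n + 1) ⊆ V n := by
        rw [hVs]; exact Set.sdiff_subset
      have hfpos : (0 : ℝ) < f n := by
        have := hf8 n
        exact_mod_cast (by omega : 0 < f n)
      have hE' : ∀ F : Finset X, (F : Set X) ⊆ V (n + 1) → Conn nb F →
          (∀ i < n + 1, f i ≤ 8 * F.card) →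
          (1 + ε - ∑ i ∈ Finset.range (n + 1), 8 / (f i : ℝ)) * (F.card : ℝ) ≤
          ((NV nb (V (n + 1)) F).card : ℝ) := by
        intro F hFV hF hfi
        obtain ⟨c, hc1, hc2, -⟩ := hst F hFV hF
        have h1 := hE F (hFV.trans hsubV) hF (fun i hi => hfi i (by omega))
        have hfn := hfi n (by omega)
        have hcf : c * f n ≤ 8 * F.card := by
          rcases hc2 with h | h
          · calc c * f n ≤ 1 * f n := Nat.mul_le_mul_right _ h
              _ ≤ _ := by omega
          · exact h
        have hcf' : (c : ℝ) * f n ≤ 8 * F.card := by exact_mod_cast hcf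
        have hc : (c : ℝ) ≤ 8 / (f n : ℝ) * F.card := by
          rw [div_mul_eq_mul_div, le_div_iff₀ hfpos]
          exact hcf'
        have hc1' : ((NV nb (V n) F).card : ℝ) ≤ (NV nb (V (n + 1)) F).card + c := by
          exact_mod_cast hc1
        rw [Finset.sum_range_succ]
        linarith
      refine ⟨?_, ?_, hE'⟩
      · have himg : MeasurableSet (Y (V n) '' (A n ∩ V n)) := by
          refine ((hA n).inter hm).image_of_measurable_injOn hYm ?_
          intro a ha b hb hab
          have h1 := near_adj (hYg a ha.2).2.1
          have h2 := near_adj (hYg b hb.2).2.1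
          rw [← hab] at h2
          exact hnear n a b ha.1 hb.1 (h1.trans h2.symm)
        have : V (n + 1) = V n \ ((A n ∩ V n) ∪ Y (V n) '' (A n ∩ V n)) := by
          rw [hVs]
          congr 1
          ext p
          constructor
          · rintro ⟨x, hx, rfl | rfl⟩
            · exact Or.inl hx
            · exact Or.inr ⟨x, hx, rfl⟩
          · rintro (h | ⟨x, hx, rfl⟩)
            · exact ⟨p, h, Or.inl rfl⟩
            · exact ⟨x, hx, Or.inr rfl⟩
        rw [this]
        exact hm.diff (((hA n).inter hm).union himg)
      · apply hall_of_conn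
        intro F hFV hF
        obtain ⟨c, hc1, hc2, hc3⟩ := hst F hFV hF
        by_cases hc : c ≤ 1
        · exact hc3 hc
        · have hcf := hc2.resolve_left hc
          have h1 : f n ≤ 8 * F.card := by
            refine le_trans ?_ hcf
            exact Nat.le_mul_of_pos_left _ (by omega)
          have h2 := hE' F hFV hF (fun i hi => (hmono (by omega : i ≤ n)).trans h1)
          have h3 := hsum (n + 1)
          have h4 : (0 : ℝ) ≤ F.card := by positivity
          have h5 : (F.card : ℝ) ≤ ((NV nb (V (n + 1)) F).card : ℝ) := by nlinarith
          exact_mod_cast h5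
  have hYm : ∀ n, Measurable (Y (V n)) := fun n => (hY (V n) (inv n).1 (inv n).2.1).1
  have hYg : ∀ n, ∀ x ∈ V n, Good G g (V n) x (Y (V n) x) :=
    fun n => (hY (V n) (inv n).1 (inv n).2.1).2
  have hanti : Antitone V := antitone_nat_of_succ_le fun n => by
    rw [hVs]; exact Set.sdiff_subset
  let T : ℕ → X → X → Prop := fun n a b => (a ∈ A n ∧ a ∈ V n) ∧ b = Y (V n) a
  have hT1 : ∀ n a b, T n a b → G.Adj a b := by
    rintro n a b ⟨⟨-, h⟩, rfl⟩
    exact (hYg n a h).2.1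
  have hT2 : ∀ n a b, T n a b → a ∈ V n ∧ a ∉ V (n + 1) := by
    rintro n a b ⟨⟨h1, h⟩, rfl⟩
    refine ⟨h, ?_⟩
    rw [hVs]
    exact fun h' => h'.2 ⟨a, ⟨h1, h⟩, Or.inl rfl⟩
  have hT3 : ∀ n a b, T n a b → b ∈ V n ∧ b ∉ V (n + 1) := by
    rintro n a b ⟨⟨h1, h⟩, rfl⟩
    refine ⟨(hYg n a h).1, ?_⟩
    rw [hVs]
    exact fun h' => h'.2 ⟨a, ⟨h1, h⟩, Or.inr rfl⟩
  have hlev : ∀ n n' a, (a ∈ V n ∧ a ∉ V (n + 1)) → (a ∈ V n' ∧ a ∉ V (n' + 1)) → n = n' := by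
    intro n n' a h h'
    rcases lt_trichotomy n n' with hl | hl | hl
    · exact absurd (hanti (Nat.succ_le_of_lt hl) h'.1) h.2
    · exact hl
    · exact absurd (hanti (Nat.succ_le_of_lt hl) h.1) h'.2
  refine ⟨⋃ n, {p : X × X | T n p.1 p.2 ∨ T n p.2 p.1}, ?_, ?_, ?_, ?_⟩
  · refine MeasurableSet.iUnion fun n => ?_
    have h1 : MeasurableSet {p : X × X | T n p.1 p.2} :=
      (measurable_fst ((hA n).inter (inv n).1)).inter
        (measurableSet_eq_fun measurable_snd ((hYm n).comp measurable_fst))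
    exact h1.union (measurable_swap h1)
  · intro p hp
    obtain ⟨n, h | h⟩ := Set.mem_iUnion.1 hp
    · exact hT1 _ _ _ h
    · exact (hT1 _ _ _ h).symm
  · intro x y
    simp only [Set.mem_iUnion]
    exact exists_congr fun n => Or.comm
  · intro a
    have hex : ∃ b n, T n a b ∨ T n b a := by
      have : a ∈ ⋃ n, A n := by rw [hAc]; trivial
      obtain ⟨n, hn⟩ := Set.mem_iUnion.1 this
      by_cases hav : a ∈ V n
      · exact ⟨_, n, Or.inl ⟨⟨hn, hav⟩, rfl⟩⟩
      · have hex : ∃ k, a ∉ V k := ⟨n, hav⟩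
        obtain ⟨j, hj⟩ : ∃ j, Nat.find hex = j + 1 := by
          apply Nat.exists_eq_succ_of_ne_zero
          intro h0
          have := Nat.find_spec hex
          rw [h0, hV0] at this
          exact this trivial
        have h1 : a ∉ V (j + 1) := hj ▸ Nat.find_spec hex
        have h2 : a ∈ V j := by
          by_contra h
          have := Nat.find_min' hex h
          omega
        rw [hVs] at h1
        have h3 : a ∈ {p | ∃ x ∈ A j ∩ V j, p = x ∨ p = Y (V j) x} := by
          by_contra h
          exact h1 ⟨h2, h⟩
        obtain ⟨x, hx, rfl | h⟩ := h3
        · exact ⟨_, j, Or.inl ⟨hx, rfl⟩⟩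
        · exact ⟨x, j, Or.inr ⟨hx, h⟩⟩
    obtain ⟨b, n, hb⟩ := hex
    have hl : ∀ n b, T n a b ∨ T n b a → a ∈ V n ∧ a ∉ V (n + 1) := by
      rintro n b (h | h)
      · exact hT2 _ _ _ h
      · exact hT3 _ _ _ h
    refine ⟨b, Set.mem_iUnion.2 ⟨n, hb⟩, ?_⟩
    intro b' hb'
    obtain ⟨n', hb'⟩ := Set.mem_iUnion.1 hb'
    have hb' : T n' a b' ∨ T n' b' a := hb'
    obtain rfl := hlev _ _ a (hl n b hb) (hl n' b' hb')
    have hbad : ∀ b b', T n a b → T n b' a → False := by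
      intro b b' h h'
      have h1 := hT1 _ _ _ h'
      exact h1.ne (hnear n b' a h'.1.1 h.1.1 ((near_adj h1).mono (by omega)))
    rcases hb with h | h <;> rcases hb' with h' | h'
    · rw [h.2, h'.2]
    · exact (hbad _ _ h h').elim
    · exact (hbad _ _ h' h).elim
    · exact hnear n b' b h'.1.1 h.1.1
        ((near_adj (hT1 _ _ _ h')).trans (near_adj (hT1 _ _ _ h)).symm)

end BM

/-- **(Marks–Unger, proof of Theorem 1.3.)** Suppose `G` is a locally finite bipartite Borel
graph on a Polish space `X` with bipartition `{B₀, B₁}` satisfying `Hall_{ε,1}` for some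
`ε > 0`, and there is `f : ℕ → ℕ` with `f n ≥ 8` and `Σₙ 8 / f n < ε` such that `X` is the
union of Borel sets `Aₙ` in which distinct points have `G`-distance greater than `f n`
(i.e., every `G`-walk between them has length greater than `f n`). Then `G` has a Borel
perfect matching. -/
theorem borel_matching_of_sparse_decomposition {X : Type*} [TopologicalSpace X] [PolishSpace X]
    [MeasurableSpace X] [BorelSpace X]
    (G : SimpleGraph X)
    (hGBorel : MeasurableSet {p : X × X | G.Adj p.1 p.2})
    (hlocfin : ∀ x : X, (G.neighborSet x).Finite)
    (B₀ B₁ : Set X) (hcover : B₀ ∪ B₁ = Set.univ) (hdisj : Disjoint B₀ B₁)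
    (hbip : ∀ x y : X, G.Adj x y → (x ∈ B₀ ∧ y ∈ B₁) ∨ (x ∈ B₁ ∧ y ∈ B₀))
    (ε : ℝ) (hε : 0 < ε)
    (f : ℕ → ℕ) (hf8 : ∀ n, 8 ≤ f n)
    (hfsummable : Summable (fun n => 8 / (f n : ℝ)))
    (hfsum : (∑' n, 8 / (f n : ℝ)) < ε)
    (hHall : ∀ F : Finset X, ((F : Set X) ⊆ B₀ ∨ (F : Set X) ⊆ B₁) →
      (1 + ε) * (F.card : ℝ) ≤ ((graphNbhd G (F : Set X)).ncard : ℝ))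
    (A : ℕ → Set X)
    (hABorel : ∀ n, MeasurableSet (A n))
    (hAcover : (⋃ n, A n) = Set.univ)
    (hAspread : ∀ n, ∀ x ∈ A n, ∀ y ∈ A n, x ≠ y → ∀ p : G.Walk x y, f n < p.length) :
    ∃ M : Set (X × X), MeasurableSet M ∧ IsPerfectMatchingRel G M := by
  have hlim : Filter.Tendsto f Filter.atTop Filter.atTop := by
    have h0 := hfsummable.tendsto_atTop_zero
    rw [Filter.tendsto_atTop_atTop]
    intro b
    have hpos : (0 : ℝ) < 8 / ((b : ℝ) + 1) := by positivity
    obtain ⟨N, hN⟩ := Filter.eventually_atTop.1 (h0.eventually (gt_mem_nhds hpos))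
    refine ⟨N, fun n hn => ?_⟩
    have h1 := hN n hn
    have hfp : (0 : ℝ) < f n := by
      have := hf8 n
      exact_mod_cast (by omega : 0 < f n)
    rw [div_lt_div_iff₀ hfp (by positivity)] at h1
    have h2 : (b : ℝ) ≤ f n := by linarith
    exact_mod_cast h2
  obtain ⟨σ, hσ⟩ := BM.exists_sort f hlim
  have hnb : ∀ x y, y ∈ (hlocfin x).toFinset ↔ G.Adj x y := fun x y => by simp
  refine BM.core (nb := fun x => (hlocfin x).toFinset) hnb hGBorel hcover hdisj hbip
    (ε := ε) (f := f ∘ σ) (fun n => hf8 _) hσ ?_ ?_ (A := A ∘ σ) (fun n => hABorel _) ?_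
    (fun n => hAspread _)
  · intro n
    have h1 := (σ.summable_iff.2 hfsummable).sum_le_tsum (Finset.range n)
      (fun i _ => by simp only [Function.comp]; positivity)
    have h2 := σ.tsum_eq (fun n => 8 / (f n : ℝ))
    simp only [Function.comp] at h1 ⊢
    linarith
  · intro F hF
    have hside := BM.one_sided hnb hcover hdisj hbip hF
    have h1 := hHall F hside
    have h2 : graphNbhd G (F : Set X) ⊆
        (BM.NV (fun x => (hlocfin x).toFinset) Set.univ F : Finset X) := by
      rintro y ⟨-, x, hx, hxy⟩
      rw [Finset.mem_coe, BM.mem_NV]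
      exact ⟨⟨x, hx, (hnb x y).2 hxy⟩, trivial⟩
    have h3 := Set.ncard_le_ncard h2 (Finset.finite_toSet _)
    rw [Set.ncard_coe_finset] at h3
    exact h1.trans (by exact_mod_cast h3)
  · rw [← hAcover]
    exact σ.surjective.iUnion_comp A
end
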